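/- Let Ω ⊂ ℝ² be open and convex. Let v₁, v₂ ∈ ℝ² be unit vectors and let a₁, a₂ ∈ (0,1] be such that the cones C₁ := C(v₁,a₁) and C₂ := C(v₂,a₂) satisfy C₁ ∩ C₂ = {0} and (−C₁) ∩ C₂ = {0}. Suppose f′₁, f′₂ ∈ BV(Ω) satisfy dDf′₁/d|Df′₁|(x) ∈ C₁ for |Df′₁|-a.e. x ∈ Ω and dDf′₂/d|Df′₂|(x) ∈ C₂ for |Df′₂|-a.e. x ∈ Ω. Define f₁(y) := f′₁(y) + v₁·y, f₂(y) := f′₂(y) + v₂·y, and f := (f₁,f₂), and assume f ∈ BV(Ω;ℝ²). Then the precise representative f* is injective, and for |Df|-a.e. x ∈ Ω the following holds: if h′_{f*}(x) = ∞, then the matrix dDf/d|Df|(x) has rank one. -/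

import Mathlib

/-!
The cones `C₁`, `C₂` and `-C₁`, `C₂` can be strictly separated by linear functionals, represented by
two vectors `Q` and `P`. In the linear coordinates `(x, y) ↦ (x + y) P + (y - x) Q` every gradient
in `C₁` is non-negative on the sector `|y| ≤ K x` and every gradient in `C₂` on the sector
`|x| ≤ K y`, for one constant `K > 1` (`exists_coords`). Mollification and integration by parts show
that a BV function whose polar density lies in a cone is monotone along the dual directions off a
null set (`IsBVScalarOn.exists_monotone`), and this passes to the precise representative, which is
squeezed between nearby values (`preciseRep_bounds`). Together with the linear terms `vᵢ · y` this
makes `f₁*` and `f₂*`, written in the new coordinates as `u₁` and `u₂`, grow at least linearly on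
sectors that are strictly wider than the quadrants `|y| ≤ x` and `|x| ≤ y` (`scalar_package`). Any
two points differ by a vector in one of these quadrants or its negative, so `f*` is bounded below by
a multiple of the distance; in particular it is injective (`exists_lower_lipschitz`).

The lower bound turns `h′ = ∞` into a statement on growth: the sum of the horizontal increment of
`u₁` and the vertical increment of `u₂` over segments of length comparable to `r` is eventually
larger than `M r`, for each `M` (`increments_of_hprime`). On the other hand, let `ν` be the total
variation measure in the new coordinates, and let `x` be a Lebesgue point of the polar density at
which both rows are non-zero. Testing with bump functions gives `ν(Q(x, r)) ≤ m r · inc` for either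
increment, at all small radii at which `ν` is doubling (`ae_increment_lower`), and such radii are
arbitrarily small at almost every point (`ae_frequently_doubling`).

Finally the level sets of `u₁` and `u₂` are graphs over the vertical and the horizontal axis with
Lipschitz constant below one, so a level set of `u₁` and a level set of `u₂` meet in at most one
point. Hence the rectangles with sides `inc u₁` and `inc u₂` coming from disjoint squares are
disjoint, and the sum of their areas is bounded (`packing`). As the larger increment is at least
`M r / 2`, a square of side comparable to `r` satisfies `ν(Q) ≤ (2 m / M) · inc u₁ · inc u₂`, and a
Besicovitch covering shows that the set of all such points has measure at most a constant times
`m / M` for every `M`; it is null (`null_of_increments`). So `h′ = ∞` forces, almost everywhere, one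
row of the polar density to vanish, and a unit matrix with a vanishing row has rank one.
-/

open MeasureTheory Filter
open scoped ENNReal RealInnerProductSpace

noncomputable section

/-- The closed cone `C(v,a) = {x ∈ ℝ² : x·v ≥ a|x|}`. -/
def cone (v : EuclideanSpace ℝ (Fin 2)) (a : ℝ) : Set (EuclideanSpace ℝ (Fin 2)) :=
  {x | a * ‖x‖ ≤ ⟪x, v⟫}

/-- `u ∈ BV(Ω)` for an open set `Ω ⊂ ℝ²`, presented through the polar decomposition
`Du = σ |Du|`: `ν` plays the role of the total variation measure `|Du|` (a finite positive
measure concentrated on `Ω`) and `σ = dDu/d|Du|` is the vector-valued Radon–Nikodym density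
of unit length `ν`-a.e.; the defining requirement is the integration-by-parts formula
`∫_Ω u ∂φ/∂y_l dL² = −∫_Ω φ σ_l dν` for all `φ ∈ C_c¹(Ω)`. -/
structure IsBVScalarOn (Ω : Set (EuclideanSpace ℝ (Fin 2)))
    (u : EuclideanSpace ℝ (Fin 2) → ℝ)
    (ν : Measure (EuclideanSpace ℝ (Fin 2)))
    (σ : EuclideanSpace ℝ (Fin 2) → EuclideanSpace ℝ (Fin 2)) : Prop where
  integrable : IntegrableOn u Ω volume
  finite : ν Set.univ < ⊤
  concentrated : ν Ωᶜ = 0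
  meas : Measurable σ
  unit : ∀ᵐ x ∂ν, ‖σ x‖ = 1
  parts : ∀ φ : EuclideanSpace ℝ (Fin 2) → ℝ, ContDiff ℝ 1 φ → HasCompactSupport φ →
    tsupport φ ⊆ Ω → ∀ l : Fin 2,
      ∫ x in Ω, u x * fderiv ℝ φ x (EuclideanSpace.single l (1:ℝ)) ∂volume
        = - ∫ x, φ x * σ x l ∂ν

/-- The precise representative `u*`. -/
def preciseRep (u : EuclideanSpace ℝ (Fin 2) → ℝ) (x : EuclideanSpace ℝ (Fin 2)) : ℝ :=
  sInf {t : ℝ | Tendsto (fun r : ℝ =>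
      volume (Metric.ball x r ∩ {y | t < u y}) / volume (Metric.ball x r))
    (nhdsWithin 0 (Set.Ioi 0)) (nhds 0)}

/-- The componentwise precise representative `f* = (f₁*, f₂*)` of `f = (f₁, f₂)`. -/
def preciseRepVec (f₁ f₂ : EuclideanSpace ℝ (Fin 2) → ℝ) (x : EuclideanSpace ℝ (Fin 2)) :
    EuclideanSpace ℝ (Fin 2) :=
  (WithLp.equiv 2 (Fin 2 → ℝ)).symm ![preciseRep f₁ x, preciseRep f₂ x]

/-- `f ∈ BV(Ω; ℝ²)` for an open set `Ω ⊂ ℝ²`, presented through the polar decomposition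
`Df = σ |Df|`: `ν` plays the role of `|Df|` and the matrix field `σ = dDf/d|Df|` has unit
(Frobenius/Euclidean) norm `ν`-a.e.; the defining requirement is the integration-by-parts
formula `∫_Ω f_j ∂φ/∂y_l dL² = −∫_Ω φ σ_{jl} dν` for all `φ ∈ C_c¹(Ω)`. -/
structure IsBVVecOn (Ω : Set (EuclideanSpace ℝ (Fin 2)))
    (f : EuclideanSpace ℝ (Fin 2) → EuclideanSpace ℝ (Fin 2))
    (ν : Measure (EuclideanSpace ℝ (Fin 2)))
    (σ : EuclideanSpace ℝ (Fin 2) → Matrix (Fin 2) (Fin 2) ℝ) : Prop where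
  integrable : IntegrableOn f Ω volume
  finite : ν Set.univ < ⊤
  concentrated : ν Ωᶜ = 0
  meas : ∀ j l, Measurable fun x => σ x j l
  unit : ∀ᵐ x ∂ν, ∑ j, ∑ l, (σ x j l) ^ 2 = 1
  parts : ∀ φ : EuclideanSpace ℝ (Fin 2) → ℝ, ContDiff ℝ 1 φ → HasCompactSupport φ →
    tsupport φ ⊆ Ω → ∀ j l : Fin 2,
      ∫ x in Ω, f x j * fderiv ℝ φ x (EuclideanSpace.single l (1:ℝ)) ∂volume
        = - ∫ x, φ x * σ x j l ∂ν

/-- `L_g(y,r) = sup{d_Y(g(z),g(y)) : z ∈ Ω, d(z,y) ≤ r}`, valued in `ℝ≥0∞`. -/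
def Lsup {X Y : Type*} [PseudoMetricSpace X] [PseudoEMetricSpace Y]
    (Ω : Set X) (g : X → Y) (y : X) (r : ℝ) : ℝ≥0∞ :=
  ⨆ z ∈ {z ∈ Ω | dist z y ≤ r}, edist (g z) (g y)

/-- `l_g(y,r) = inf{d_Y(g(z),g(y)) : z ∈ Ω, d(z,y) ≥ r}`, valued in `ℝ≥0∞`. -/
def linf {X Y : Type*} [PseudoMetricSpace X] [PseudoEMetricSpace Y]
    (Ω : Set X) (g : X → Y) (y : X) (r : ℝ) : ℝ≥0∞ :=
  ⨅ z ∈ {z ∈ Ω | r ≤ dist z y}, edist (g z) (g y)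

/-- The quotient `L/l`, interpreted as `∞` whenever the denominator vanishes. -/
def Hratio (L l : ℝ≥0∞) : ℝ≥0∞ := if l = 0 then ⊤ else L / l

/-- The quantity `h′_g(x) = inf{liminf_j L_g(y_j,5r_j)/l_g(y_j,r_j) : r_j → 0, d(y_j,x) < r_j}`
of (1.1), for a mapping `g` defined on `Ω`. -/
def hprime {X Y : Type*} [PseudoMetricSpace X] [PseudoEMetricSpace Y]
    (Ω : Set X) (g : X → Y) (x : X) : ℝ≥0∞ :=
  ⨅ (r : ℕ → ℝ) (y : ℕ → X) (_ : Filter.Tendsto r Filter.atTop (nhds 0))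
    (_ : ∀ j, 0 < r j) (_ : ∀ j, y j ∈ Ω) (_ : ∀ j, dist (y j) x < r j),
    Filter.liminf
      (fun j => Hratio (Lsup Ω g (y j) (5 * r j)) (linf Ω g (y j) (r j)))
      Filter.atTop

/-! ### Level sets of cone-monotone functions -/

/-- The value `s` is sandwiched at `z`: `u ≥ s` on the open sector `|Δ₂| < K Δ₁` to the right of `z`
and `u ≤ s` on the opposite sector. For a possibly discontinuous `u` this replaces the statement
that `z` lies on the level set `{u = s}`. -/
def Between (K : ℝ) (U : Set (ℝ × ℝ)) (u : ℝ × ℝ → ℝ) (s : ℝ) (z : ℝ × ℝ) : Prop :=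
  (∀ p ∈ U, |p.2 - z.2| < K * (p.1 - z.1) → s ≤ u p) ∧
    ∀ p ∈ U, |p.2 - z.2| < K * (z.1 - p.1) → u p ≤ s

/-- `u` grows at least at rate `c` in the first coordinate along the open sector `|Δ₂| < K Δ₁`.
The analogue for the second coordinate is expressed by composing with `Prod.swap`. -/
def ConeMono (K c : ℝ) (U : Set (ℝ × ℝ)) (u : ℝ × ℝ → ℝ) : Prop :=
  ∀ z ∈ U, ∀ z' ∈ U, |z'.2 - z.2| < K * (z'.1 - z.1) → u z + c * (z'.1 - z.1) ≤ u z'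

lemma ConeMono.le {K c : ℝ} {U : Set (ℝ × ℝ)} {u : ℝ × ℝ → ℝ} (h : ConeMono K c U u)
    (hK : 1 < K) (hc : 0 < c) {z z' : ℝ × ℝ} (hz : z ∈ U) (hz' : z' ∈ U)
    (hzz : |z'.2 - z.2| < K * (z'.1 - z.1)) : u z ≤ u z' := by
  have h1 := h z hz z' hz' hzz
  have h2 : 0 < z'.1 - z.1 := by
    have := (abs_nonneg _).trans_lt hzz
    exact pos_of_mul_pos_right this (by linarith)
  nlinarith

/-- Two points at which the same value is sandwiched are not comparable in the sector order: otherwise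
`u ≥ s` just after the first one and `u ≤ s` just before the second one, against strict growth. -/
lemma Between.aux {K c : ℝ} {U : Set (ℝ × ℝ)} {u : ℝ × ℝ → ℝ} (h : ConeMono K c U u)
    (hK : 1 < K) (hc : 0 < c) (hU : Convex ℝ U) {s : ℝ} {z z' : ℝ × ℝ} (hz : z ∈ U) (hz' : z' ∈ U)
    (hs : Between K U u s z) (hs' : Between K U u s z') :
    ¬ |z'.2 - z.2| < K * (z'.1 - z.1) := by
  intro hlt
  have hpos : 0 < z'.1 - z.1 := by
    have := (abs_nonneg _).trans_lt hlt
    exact pos_of_mul_pos_right this (by linarith)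
  have hmem : ∀ t ∈ Set.Icc (0:ℝ) 1, z + t • (z' - z) ∈ U := fun t ht =>
    hU.add_smul_sub_mem hz hz' ht
  have hp := hmem (1/3) (by norm_num)
  have hq := hmem (2/3) (by norm_num)
  rw [abs_lt] at hlt
  have h1 : s ≤ u (z + (1/3:ℝ) • (z' - z)) := by
    apply hs.1 _ hp
    simp only [Prod.fst_add, Prod.snd_add, Prod.smul_fst, Prod.smul_snd, Prod.fst_sub,
      Prod.snd_sub, smul_eq_mul]
    rw [abs_lt]; constructor <;> linarith
  have h2 : u (z + (2/3:ℝ) • (z' - z)) ≤ s := by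
    apply hs'.2 _ hq
    simp only [Prod.fst_add, Prod.snd_add, Prod.smul_fst, Prod.smul_snd, Prod.fst_sub,
      Prod.snd_sub, smul_eq_mul]
    rw [abs_lt]; constructor <;> linarith
  have h3 := h _ hp _ hq (by
    simp only [Prod.fst_add, Prod.snd_add, Prod.smul_fst, Prod.smul_snd, Prod.fst_sub,
      Prod.snd_sub, smul_eq_mul]
    rw [abs_lt]; constructor <;> linarith)
  simp only [Prod.fst_add, Prod.smul_fst, Prod.fst_sub, smul_eq_mul] at h3
  nlinarith

/-- Level sets, in the sense of `Between`, are `1 / K`-Lipschitz graphs over the second coordinate. -/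
lemma Between.le_abs {K c : ℝ} {U : Set (ℝ × ℝ)} {u : ℝ × ℝ → ℝ} (h : ConeMono K c U u)
    (hK : 1 < K) (hc : 0 < c) (hU : Convex ℝ U) {s : ℝ} {z z' : ℝ × ℝ} (hz : z ∈ U) (hz' : z' ∈ U)
    (hs : Between K U u s z) (hs' : Between K U u s z') :
    K * |z'.1 - z.1| ≤ |z'.2 - z.2| := by
  have h1 := Between.aux h hK hc hU hz hz' hs hs'
  have h2 := Between.aux h hK hc hU hz' hz hs' hs
  rw [not_lt] at h1 h2
  rw [abs_sub_comm] at h2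
  rcases abs_cases (z'.1 - z.1) with h | h <;> rw [h.1]
  · exact h1
  · linarith

lemma mem_closedBall_prod {x z : ℝ × ℝ} {r : ℝ} :
    z ∈ Metric.closedBall x r ↔ |z.1 - x.1| ≤ r ∧ |z.2 - x.2| ≤ r := by
  rw [Metric.mem_closedBall, Prod.dist_eq, max_le_iff, Real.dist_eq, Real.dist_eq]

/-- If `σ` lies strictly between the values of `u` at the ends of the horizontal segment of
half-length `s` centred at `x`, then its level set crosses every horizontal line of the square of
radius `r`, provided `r` is large enough for the vertical sides to be comparable with these ends. -/
lemma exists_graph {K c : ℝ} {U : Set (ℝ × ℝ)} {u : ℝ × ℝ → ℝ} (h : ConeMono K c U u)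
    (hK : 1 < K) (hc : 0 < c) {x : ℝ × ℝ} {r s σ : ℝ} (hs : 0 ≤ s)
    (hr : r < K * (r - s)) (hsr : s < r) (hx : Metric.closedBall x r ⊆ U)
    (h1 : u (x.1 - s, x.2) < σ) (h2 : σ < u (x.1 + s, x.2)) (y : ℝ)
    (hy : |y - x.2| ≤ r) :
    ∃ a : ℝ, |a - x.1| ≤ r ∧ Between K U u σ (a, y) := by
  have hU : ∀ a, |a - x.1| ≤ r → (a, y) ∈ U := fun a ha =>
    hx (mem_closedBall_prod.2 ⟨ha, hy⟩)
  have hr0 : 0 < r := by linarith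
  have hL : u (x.1 - r, y) < σ := by
    refine lt_of_le_of_lt (h.le hK hc (hU _ ?_) (hx (mem_closedBall_prod.2 ⟨?_, ?_⟩)) ?_) h1
    · simp [abs_of_pos hr0]
    · simp [abs_of_nonneg hs, hsr.le]
    · simp [hr0.le]
    · calc |x.2 - y| ≤ r := by rw [abs_sub_comm]; exact hy
        _ < _ := by convert hr using 2; ring
  have hR : σ < u (x.1 + r, y) := by
    refine lt_of_lt_of_le h2 (h.le hK hc (hx (mem_closedBall_prod.2 ⟨?_, ?_⟩)) (hU _ ?_) ?_)
    · simp [abs_of_nonneg hs, hsr.le]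
    · simp [hr0.le]
    · simp [abs_of_pos hr0]
    · calc |y - x.2| ≤ r := hy
        _ < _ := by convert hr using 2; ring
  set S : Set ℝ := {a | |a - x.1| ≤ r ∧ u (a, y) < σ} with hS
  have hSne : S.Nonempty := ⟨x.1 - r, by simp [abs_of_pos hr0], hL⟩
  have hSb : BddAbove S := ⟨x.1 + r, fun a ha => by have := (abs_le.1 ha.1).2; linarith⟩
  have hg1 : x.1 - r ≤ sSup S := le_csSup hSb ⟨by simp [abs_of_pos hr0], hL⟩
  have hg2 : sSup S ≤ x.1 + r := csSup_le hSne fun a ha => by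
    have := (abs_le.1 ha.1).2; linarith
  refine ⟨sSup S, abs_le.2 ⟨by linarith, by linarith⟩, ?_, ?_⟩
  · intro p hp hlt
    simp only at hlt
    by_contra hcon
    push Not at hcon
    rcases hg2.eq_or_lt with heq | hlt'
    · have := h.le hK hc (hU (x.1 + r) (by simp [abs_of_pos hr0])) hp (by simpa [heq] using hlt)
      linarith
    · -- a point slightly to the right of `sSup S` still lies below `p` in the cone order
      obtain ⟨a, ha1, ha2⟩ : ∃ a, sSup S < a ∧ a < min (x.1 + r) (p.1 - |p.2 - y| / K) := by
        apply exists_between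
        rw [lt_min_iff]
        refine ⟨hlt', ?_⟩
        have : |p.2 - y| / K < p.1 - sSup S := by
          rw [div_lt_iff₀ (by linarith)]; linarith
        linarith
      rw [lt_min_iff] at ha2
      have haU : |a - x.1| ≤ r := abs_le.2 ⟨by linarith, by linarith [ha2.1]⟩
      have h5 : |p.2 - y| / K < p.1 - a := by linarith [ha2.2]
      rw [div_lt_iff₀ (by linarith)] at h5
      have := h.le hK hc (hU a haU) hp (by simp only; linarith)
      exact absurd (le_csSup hSb ⟨haU, by linarith⟩ : a ≤ sSup S) (by linarith)
  · intro p hp hlt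
    simp only at hlt
    have : |p.2 - y| / K < sSup S - p.1 := by
      rw [div_lt_iff₀ (by linarith)]; linarith
    obtain ⟨a, haS, ha⟩ := exists_lt_of_lt_csSup hSne
      (show p.1 + |p.2 - y| / K < sSup S by linarith)
    have h5 : |p.2 - y| / K < a - p.1 := by linarith
    rw [div_lt_iff₀ (by linarith)] at h5
    have := h.le hK hc hp (hU a haS.1) (by simp only; rw [abs_sub_comm]; linarith)
    linarith [haS.2]

/-- The level sets of `u₁` and `u₂` through a square are graphs of contractions `γ` over the vertical
and `δ` over the horizontal side, so they meet in the square: the intermediate value theorem for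
`y ↦ δ (γ y) - y` provides an intersection point. -/
lemma exists_between_both {K c : ℝ} {U : Set (ℝ × ℝ)} {u₁ u₂ : ℝ × ℝ → ℝ}
    (h₁ : ConeMono K c U u₁) (h₂ : ConeMono K c (Prod.swap ⁻¹' U) (u₂ ∘ Prod.swap))
    (hU : Convex ℝ U)
    (hK : 1 < K) (hc : 0 < c) {x : ℝ × ℝ} {r s σ τ : ℝ} (hs : 0 ≤ s)
    (hr : r < K * (r - s)) (hsr : s < r) (hx : Metric.closedBall x r ⊆ U)
    (hσ₁ : u₁ (x.1 - s, x.2) < σ) (hσ₂ : σ < u₁ (x.1 + s, x.2))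
    (hτ₁ : u₂ (x.1, x.2 - s) < τ) (hτ₂ : τ < u₂ (x.1, x.2 + s)) :
    ∃ z ∈ Metric.closedBall x r, Between K U u₁ σ z ∧
      Between K (Prod.swap ⁻¹' U) (u₂ ∘ Prod.swap) τ z.swap := by
  have hr0 : 0 < r := by linarith
  have hU' : Convex ℝ (Prod.swap ⁻¹' U) :=
    hU.is_linear_preimage (f := Prod.swap) ⟨fun _ _ => rfl, fun _ _ => rfl⟩
  have hx' : Metric.closedBall x.swap r ⊆ Prod.swap ⁻¹' U := by
    intro z hz
    apply hx
    rw [mem_closedBall_prod] at hz ⊢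
    exact hz.symm
  have e1 := fun y hy => exists_graph h₁ hK hc hs hr hsr hx hσ₁ hσ₂ y hy
  have e2 := fun y hy => exists_graph (x := x.swap) h₂ hK hc hs hr hsr hx' hτ₁ hτ₂ y hy
  choose! γ hγ hγB using e1
  choose! δ hδ hδB using e2
  simp only [Prod.fst_swap, Prod.snd_swap] at hδ hδB
  have hγc : ∀ y y', |y - x.2| ≤ r → |y' - x.2| ≤ r → |γ y' - γ y| ≤ |y' - y| := by
    intro y y' hy hy'
    have := Between.le_abs h₁ hK hc hU (hx (mem_closedBall_prod.2 ⟨hγ y hy, hy⟩))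
      (hx (mem_closedBall_prod.2 ⟨hγ y' hy', hy'⟩)) (hγB y hy) (hγB y' hy')
    simp only at this
    nlinarith [abs_nonneg (γ y' - γ y)]
  have hδc : ∀ y y', |y - x.1| ≤ r → |y' - x.1| ≤ r → |δ y' - δ y| ≤ |y' - y| := by
    intro y y' hy hy'
    have := Between.le_abs h₂ hK hc hU' (hx' (mem_closedBall_prod.2 ⟨hδ y hy, hy⟩))
      (hx' (mem_closedBall_prod.2 ⟨hδ y' hy', hy'⟩)) (hδB y hy) (hδB y' hy')
    simp only at this
    nlinarith [abs_nonneg (δ y' - δ y)]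
  have hI : ∀ y, y ∈ Set.Icc (x.2 - r) (x.2 + r) ↔ |y - x.2| ≤ r := by
    intro y; rw [abs_le, Set.mem_Icc]; constructor <;> rintro ⟨h1, h2⟩ <;> constructor <;> linarith
  have hcont : ContinuousOn (fun y => δ (γ y) - y) (Set.Icc (x.2 - r) (x.2 + r)) := by
    refine ContinuousOn.sub ?_ continuousOn_id
    have : LipschitzOnWith 1 (fun y => δ (γ y)) (Set.Icc (x.2 - r) (x.2 + r)) := by
      refine LipschitzOnWith.of_dist_le_mul fun y' hy' y hy => ?_
      rw [hI] at hy hy'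
      simp only [Real.dist_eq, NNReal.coe_one, one_mul]
      exact (hδc _ _ (hγ y hy) (hγ y' hy')).trans (hγc y y' hy hy')
    exact this.continuousOn
  have hl : |x.2 - r - x.2| ≤ r := by simp [abs_of_pos hr0]
  have hrr : |x.2 + r - x.2| ≤ r := by simp [abs_of_pos hr0]
  have h0 : (0:ℝ) ∈ Set.Icc (δ (γ (x.2 + r)) - (x.2 + r)) (δ (γ (x.2 - r)) - (x.2 - r)) := by
    have a1 := abs_le.1 (hδ _ (hγ _ hl))
    have a2 := abs_le.1 (hδ _ (hγ _ hrr))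
    constructor <;> linarith [a1.1, a2.2]
  obtain ⟨y, hy, hy0⟩ := intermediate_value_Icc' (by linarith) hcont h0
  rw [hI] at hy
  refine ⟨(γ y, y), mem_closedBall_prod.2 ⟨hγ y hy, hy⟩, hγB y hy, ?_⟩
  have := hδB (γ y) (hγ y hy)
  simp only [sub_eq_zero] at hy0
  rw [hy0] at this
  exact this

/-- A level set of `u₁` and a level set of `u₂` meet in at most one point, since `K > 1`. -/
lemma between_both_unique {K c : ℝ} {U : Set (ℝ × ℝ)} {u₁ u₂ : ℝ × ℝ → ℝ}
    (h₁ : ConeMono K c U u₁) (h₂ : ConeMono K c (Prod.swap ⁻¹' U) (u₂ ∘ Prod.swap))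
    (hU : Convex ℝ U)
    (hK : 1 < K) (hc : 0 < c) {σ τ : ℝ} {z z' : ℝ × ℝ} (hz : z ∈ U) (hz' : z' ∈ U)
    (hB₁ : Between K U u₁ σ z) (hB₁' : Between K U u₁ σ z')
    (hB₂ : Between K (Prod.swap ⁻¹' U) (u₂ ∘ Prod.swap) τ z.swap)
    (hB₂' : Between K (Prod.swap ⁻¹' U) (u₂ ∘ Prod.swap) τ z'.swap) : z = z' := by
  have hU' : Convex ℝ (Prod.swap ⁻¹' U) :=
    hU.is_linear_preimage (f := Prod.swap) ⟨fun _ _ => rfl, fun _ _ => rfl⟩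
  have a1 := Between.le_abs h₁ hK hc hU hz hz' hB₁ hB₁'
  have a2 := Between.le_abs h₂ hK hc hU' (z := z.swap) (z' := z'.swap) hz hz' hB₂ hB₂'
  simp only [Prod.fst_swap, Prod.snd_swap] at a2
  have b1 := abs_nonneg (z'.1 - z.1)
  have b2 := abs_nonneg (z'.2 - z.2)
  have c1 : |z'.1 - z.1| = 0 := by nlinarith
  have c2 : |z'.2 - z.2| = 0 := by nlinarith
  rw [abs_eq_zero, sub_eq_zero] at c1 c2
  exact Prod.ext c1.symm c2.symm

/-! ### Packing of image rectangles and the null-set criterion -/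

/-- The increment of `u` over the horizontal segment of half-length `s` centred at `x`. -/
def hInc (u : ℝ × ℝ → ℝ) (x : ℝ × ℝ) (s : ℝ) : ℝ := u (x.1 + s, x.2) - u (x.1 - s, x.2)

/-- The increment of `u` over the vertical segment of half-length `s` centred at `x`. -/
def vInc (u : ℝ × ℝ → ℝ) (x : ℝ × ℝ) (s : ℝ) : ℝ := u (x.1, x.2 + s) - u (x.1, x.2 - s)

/-- The rectangles spanned by the increments of `u₁` and `u₂` over disjoint squares are disjoint: a
common value would be sandwiched at one point of each square, and these points coincide by
`between_both_unique`. Hence their areas add up to at most the area of a set containing them. -/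
lemma packing {K c κ : ℝ} {U V : Set (ℝ × ℝ)} {u₁ u₂ : ℝ × ℝ → ℝ}
    (h₁ : ConeMono K c U u₁) (h₂ : ConeMono K c (Prod.swap ⁻¹' U) (u₂ ∘ Prod.swap))
    (hU : Convex ℝ U) (hK : 1 < K) (hc : 0 < c) (hκ : 0 < κ) (hκK : 1 < K * (1 - κ))
    {t : Set (ℝ × ℝ)} (ht : t.Countable) {r : ℝ × ℝ → ℝ} (hr : ∀ x ∈ t, 0 < r x)
    (hrU : ∀ x ∈ t, Metric.closedBall x (r x) ⊆ U)
    (hdisj : t.PairwiseDisjoint fun x => Metric.closedBall x (r x))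
    (hV : ∀ x ∈ t, Set.Ioo (u₁ (x.1 - κ * r x, x.2)) (u₁ (x.1 + κ * r x, x.2)) ×ˢ
      Set.Ioo (u₂ (x.1, x.2 - κ * r x)) (u₂ (x.1, x.2 + κ * r x)) ⊆ V) :
    ∑' x : t, ENNReal.ofReal (hInc u₁ x (κ * r x)) * ENNReal.ofReal (vInc u₂ x (κ * r x))
      ≤ volume V := by
  set R : ℝ × ℝ → Set (ℝ × ℝ) := fun x =>
    Set.Ioo (u₁ (x.1 - κ * r x, x.2)) (u₁ (x.1 + κ * r x, x.2)) ×ˢ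
      Set.Ioo (u₂ (x.1, x.2 - κ * r x)) (u₂ (x.1, x.2 + κ * r x)) with hR
  have hκ1 : κ < 1 := by by_contra hcon; nlinarith
  have hex : ∀ x ∈ t, ∀ p ∈ R x, ∃ z ∈ Metric.closedBall x (r x), Between K U u₁ p.1 z ∧
      Between K (Prod.swap ⁻¹' U) (u₂ ∘ Prod.swap) p.2 z.swap := by
    intro x hx p hp
    have hrx := hr x hx
    refine exists_between_both h₁ h₂ hU hK hc (s := κ * r x) (by positivity) ?_ ?_ (hrU x hx)
      hp.1.1 hp.1.2 hp.2.1 hp.2.2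
    · nlinarith
    · nlinarith
  have hRdisj : t.PairwiseDisjoint R := by
    intro x hx y hy hxy
    rw [Function.onFun, Set.disjoint_left]
    intro p hpx hpy
    obtain ⟨z, hz, hz1, hz2⟩ := hex x hx p hpx
    obtain ⟨z', hz', hz1', hz2'⟩ := hex y hy p hpy
    have := between_both_unique h₁ h₂ hU hK hc (hrU x hx hz) (hrU y hy hz') hz1 hz1' hz2 hz2'
    subst this
    exact Set.disjoint_left.1 (hdisj hx hy hxy) hz hz'
  calc ∑' x : t, ENNReal.ofReal (hInc u₁ x (κ * r x)) * ENNReal.ofReal (vInc u₂ x (κ * r x))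
      = ∑' x : t, volume (R x) := by
        congr 1; ext x
        rw [hR, Measure.volume_eq_prod, Measure.prod_prod, Real.volume_Ioo, Real.volume_Ioo,
          hInc, vInc]
    _ = volume (⋃ x ∈ t, R x) :=
        (measure_biUnion ht hRdisj fun x _ => measurableSet_Ioo.prod measurableSet_Ioo).symm
    _ ≤ volume V := measure_mono (Set.iUnion₂_subset hV)

lemma ConeMono.bounds {K c : ℝ} {U : Set (ℝ × ℝ)} {u : ℝ × ℝ → ℝ} (h : ConeMono K c U u)
    (hK : 1 < K) (hc : 0 < c) {x z : ℝ × ℝ} {s : ℝ} (hs : 0 < s)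
    (hx : Metric.closedBall x (2 * s) ⊆ U) (hz : z ∈ Metric.closedBall x s) :
    u (x.1 - 2 * s, x.2) ≤ u z ∧ u z ≤ u (x.1 + 2 * s, x.2) := by
  have hzU : z ∈ U := hx (Metric.closedBall_subset_closedBall (by linarith) hz)
  rw [mem_closedBall_prod] at hz
  obtain ⟨hz1, hz2⟩ := hz
  rw [abs_le] at hz1
  have hmem : ∀ a : ℝ, |a| ≤ 2 * s → (x.1 + a, x.2) ∈ U := fun a ha =>
    hx (mem_closedBall_prod.2 ⟨by simpa using ha, by simp; linarith⟩)
  constructor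
  · refine h.le hK hc ?_ hzU ?_
    · simpa [sub_eq_add_neg] using hmem (-(2 * s)) (by simp [abs_of_pos hs])
    · simp only
      nlinarith
  · refine h.le hK hc hzU (hmem _ (by simp [abs_of_pos hs])) ?_
    · simp only
      rw [abs_sub_comm]
      nlinarith

/-- The set of points at which `N` is controlled, at arbitrarily small radii, by `r` times either
increment, while the sum of the increments is eventually larger than any multiple of `r`, is null. -/
lemma null_of_increments {K c κ : ℝ} {U : Set (ℝ × ℝ)} {u₁ u₂ : ℝ × ℝ → ℝ}
    (h₁ : ConeMono K c U u₁) (h₂ : ConeMono K c (Prod.swap ⁻¹' U) (u₂ ∘ Prod.swap))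
    (hU : Convex ℝ U) (hUo : IsOpen U)
    (hK : 1 < K) (hc : 0 < c) (hκ : 0 < κ) (hκK : 1 < K * (1 - κ))
    (N : Measure (ℝ × ℝ)) [IsFiniteMeasure N] {A : Set (ℝ × ℝ)} (hAU : A ⊆ U)
    (hA : ∀ x ∈ A, ∃ m : ℕ, ∃ᶠ r in nhdsWithin (0:ℝ) (Set.Ioi 0),
      N.real (Metric.closedBall x r) ≤ m * r * hInc u₁ x (κ * r) ∧
      N.real (Metric.closedBall x r) ≤ m * r * vInc u₂ x (κ * r))
    (hA' : ∀ x ∈ A, ∀ M : ℝ, ∀ᶠ r in nhdsWithin (0:ℝ) (Set.Ioi 0),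
      M * r ≤ hInc u₁ x (κ * r) + vInc u₂ x (κ * r)) : N A = 0 := by
  have hκ1 : κ < 1 := by by_contra hcon; nlinarith
  refine measure_null_of_locally_null A fun x₀ hx₀ => ?_
  obtain ⟨R', hR'0, hR'⟩ := Metric.isOpen_iff.1 hUo x₀ (hAU hx₀)
  obtain ⟨R, hR0, hR4⟩ : ∃ R : ℝ, 0 < R ∧ 4 * R < R' := ⟨R' / 5, by positivity, by linarith⟩
  have hball : Metric.closedBall x₀ (2 * (2 * R)) ⊆ U :=
    (Metric.closedBall_subset_ball (by linarith)).trans hR'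
  refine ⟨A ∩ Metric.closedBall x₀ R, Filter.inter_mem self_mem_nhdsWithin
    (mem_nhdsWithin_of_mem_nhds (Metric.closedBall_mem_nhds _ hR0)), ?_⟩
  -- decompose according to the constant `m`
  set Am : ℕ → Set (ℝ × ℝ) := fun m => {x ∈ A ∩ Metric.closedBall x₀ R |
    ∃ᶠ r in nhdsWithin (0:ℝ) (Set.Ioi 0),
      N.real (Metric.closedBall x r) ≤ m * r * hInc u₁ x (κ * r) ∧
      N.real (Metric.closedBall x r) ≤ m * r * vInc u₂ x (κ * r)} with hAm
  have hcover : A ∩ Metric.closedBall x₀ R ⊆ ⋃ m, Am m := by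
    intro x hx
    obtain ⟨m, hm⟩ := hA x hx.1
    exact Set.mem_iUnion.2 ⟨m, hx, hm⟩
  refine measure_mono_null hcover (measure_iUnion_null fun m => ?_)
  set V : Set (ℝ × ℝ) :=
    Set.Icc (u₁ (x₀.1 - 2 * (2 * R), x₀.2)) (u₁ (x₀.1 + 2 * (2 * R), x₀.2)) ×ˢ
      Set.Icc (u₂ (x₀.1, x₀.2 - 2 * (2 * R))) (u₂ (x₀.1, x₀.2 + 2 * (2 * R))) with hV
  have hVfin : volume V ≠ ⊤ := by
    rw [hV, Measure.volume_eq_prod, Measure.prod_prod, Real.volume_Icc, Real.volume_Icc]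
    exact ENNReal.mul_ne_top ENNReal.ofReal_ne_top ENNReal.ofReal_ne_top
  have key : ∀ M : ℝ, 0 < M → N (Am m) ≤ ENNReal.ofReal (2 * m / M) * volume V := by
    intro M hM
    obtain ⟨t, r, htc, htA, htr, htN, htd⟩ := Besicovitch.exists_disjoint_closedBall_covering_ae N
      (fun x => {r | (N.real (Metric.closedBall x r) ≤ m * r * hInc u₁ x (κ * r) ∧
        N.real (Metric.closedBall x r) ≤ m * r * vInc u₂ x (κ * r)) ∧
        M * r ≤ hInc u₁ x (κ * r) + vInc u₂ x (κ * r)}) (Am m) (by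
        intro x hx δ hδ
        have := hx.2.and_eventually ((hA' x hx.1.1 M).and (Ioo_mem_nhdsGT hδ))
        obtain ⟨r, hr1, hr2, hr3⟩ := this.exists
        exact ⟨r, ⟨hr1, hr2⟩, hr3⟩) (fun _ => R) (fun _ _ => hR0)
    have hsub : ∀ x ∈ t, Metric.closedBall x (r x) ⊆ Metric.closedBall x₀ (2 * R) := by
      intro x hx
      refine Metric.closedBall_subset_closedBall' ?_
      have h1 := (htr x hx).2.2
      have h2 := (htA hx).1.2
      rw [Metric.mem_closedBall] at h2
      linarith
    have hsubU : ∀ x ∈ t, Metric.closedBall x (r x) ⊆ U := fun x hx =>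
      ((hsub x hx).trans (Metric.closedBall_subset_closedBall (by linarith))).trans hball
    have hpt : ∀ x ∈ t, ∀ e : ℝ × ℝ, |e.1| ≤ r x → |e.2| ≤ r x →
        (x.1 + e.1, x.2 + e.2) ∈ Metric.closedBall x (r x) := fun x hx e h1 h2 =>
      mem_closedBall_prod.2 ⟨by simpa using h1, by simpa using h2⟩
    have hks : ∀ x ∈ t, |κ * r x| ≤ r x := by
      intro x hx
      have := (htr x hx).2.1
      rw [abs_of_pos (by positivity)]
      nlinarith
    have hpU : ∀ x ∈ t, (x.1 + κ * r x, x.2) ∈ Metric.closedBall x (r x) ∧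
        (x.1 - κ * r x, x.2) ∈ Metric.closedBall x (r x) ∧
        (x.1, x.2 + κ * r x) ∈ Metric.closedBall x (r x) ∧
        (x.1, x.2 - κ * r x) ∈ Metric.closedBall x (r x) := by
      intro x hx
      have h0 := (htr x hx).2.1.le
      have hk := hks x hx
      refine ⟨?_, ?_, ?_, ?_⟩ <;> rw [mem_closedBall_prod] <;>
        simp only [add_sub_cancel_left, sub_sub_cancel_left, sub_self, abs_zero, abs_neg] <;>
        exact ⟨by assumption, by assumption⟩
    have hswap : Metric.closedBall x₀.swap (2 * (2 * R)) ⊆ Prod.swap ⁻¹' U := by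
      intro z hz
      apply hball
      rw [mem_closedBall_prod] at hz ⊢
      exact hz.symm
    have hb1 : ∀ z ∈ Metric.closedBall x₀ (2 * R),
        u₁ (x₀.1 - 2 * (2 * R), x₀.2) ≤ u₁ z ∧ u₁ z ≤ u₁ (x₀.1 + 2 * (2 * R), x₀.2) :=
      fun z hz => h₁.bounds hK hc (by linarith) hball hz
    have hb2 : ∀ z ∈ Metric.closedBall x₀ (2 * R),
        u₂ (x₀.1, x₀.2 - 2 * (2 * R)) ≤ u₂ z ∧ u₂ z ≤ u₂ (x₀.1, x₀.2 + 2 * (2 * R)) :=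
      fun z hz => h₂.bounds (x := x₀.swap) (z := z.swap) hK hc (by linarith) hswap (by
        rw [mem_closedBall_prod] at hz ⊢; exact hz.symm)
    have hpack := packing (V := V) h₁ h₂ hU hK hc hκ hκK htc (fun x hx => (htr x hx).2.1) hsubU htd (by
      intro x hx p hp
      obtain ⟨p1, p2, p3, p4⟩ := hpU x hx
      have hs := hsub x hx
      exact ⟨⟨(hb1 _ (hs p2)).1.trans hp.1.1.le, hp.1.2.le.trans (hb1 _ (hs p1)).2⟩,
        ⟨(hb2 _ (hs p4)).1.trans hp.2.1.le, hp.2.2.le.trans (hb2 _ (hs p3)).2⟩⟩)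
    have hterm : ∀ x ∈ t, N (Metric.closedBall x (r x)) ≤ ENNReal.ofReal (2 * m / M) *
        (ENNReal.ofReal (hInc u₁ x (κ * r x)) * ENNReal.ofReal (vInc u₂ x (κ * r x))) := by
      intro x hx
      obtain ⟨⟨⟨g1, g2⟩, g3⟩, g4, g5⟩ := htr x hx
      obtain ⟨p1, p2, p3, p4⟩ := hpU x hx
      have hκr : 0 < κ * r x := by positivity
      have hn1 : 0 ≤ hInc u₁ x (κ * r x) := by
        have := h₁.le hK hc (hsubU x hx p2) (hsubU x hx p1) (by
          simp only [sub_self, abs_zero]; nlinarith)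
        rw [hInc]; linarith
      have hn2 : 0 ≤ vInc u₂ x (κ * r x) := by
        have := h₂.le (z := (x.2 - κ * r x, x.1)) (z' := (x.2 + κ * r x, x.1)) hK hc
          (hsubU x hx p4) (hsubU x hx p3) (by
          simp only [sub_self, abs_zero]; nlinarith)
        simp only [Function.comp, Prod.swap_prod_mk] at this
        rw [vInc]; linarith
      rw [← ENNReal.ofReal_mul hn1, ← ENNReal.ofReal_mul (by positivity), ← ofReal_measureReal]
      apply ENNReal.ofReal_le_ofReal
      rw [div_mul_eq_mul_div, le_div_iff₀ hM]
      set a := hInc u₁ x (κ * r x)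
      set b := vInc u₂ x (κ * r x)
      set n := N.real (Metric.closedBall x (r x))
      have hn : 0 ≤ n := measureReal_nonneg
      have hm0 : (0:ℝ) ≤ m := Nat.cast_nonneg m
      -- one of the two increments is at least `M r / 2`
      rcases le_total (M * r x) (2 * a) with ha | ha
      · have : M * r x * (m * b) ≤ 2 * a * (m * b) := by gcongr
        nlinarith
      · have hb : M * r x ≤ 2 * b := by linarith
        have : M * r x * (m * a) ≤ 2 * b * (m * a) := by gcongr
        nlinarith
    calc N (Am m) ≤ N (⋃ x ∈ t, Metric.closedBall x (r x)) := by
          have h := measure_le_inter_add_sdiff N (Am m) (⋃ x ∈ t, Metric.closedBall x (r x))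
          rw [htN, add_zero] at h
          exact h.trans (measure_mono Set.inter_subset_right)
      _ ≤ ∑' x : t, N (Metric.closedBall x (r x)) := measure_biUnion_le N htc _
      _ ≤ ∑' x : t, ENNReal.ofReal (2 * m / M) *
        (ENNReal.ofReal (hInc u₁ x (κ * r x)) * ENNReal.ofReal (vInc u₂ x (κ * r x))) :=
          ENNReal.tsum_le_tsum fun x => hterm x x.2
      _ = ENNReal.ofReal (2 * m / M) * ∑' x : t,
        (ENNReal.ofReal (hInc u₁ x (κ * r x)) * ENNReal.ofReal (vInc u₂ x (κ * r x))) :=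
          ENNReal.tsum_mul_left
      _ ≤ ENNReal.ofReal (2 * m / M) * volume V := by gcongr
  have hlim : Tendsto (fun M : ℝ => ENNReal.ofReal (2 * m / M) * volume V) atTop (nhds 0) := by
    have h1 : Tendsto (fun M : ℝ => ENNReal.ofReal (2 * m / M)) atTop (nhds 0) := by
      rw [← ENNReal.ofReal_zero]
      exact ENNReal.tendsto_ofReal (tendsto_const_nhds.div_atTop tendsto_id)
    simpa using ENNReal.Tendsto.mul_const h1 (Or.inr hVfin)
  exact le_antisymm (ge_of_tendsto hlim ((eventually_gt_atTop 0).mono key)) zero_le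

/-! ### Differentiation of measures and increments -/

/-- Cut-off functions between the squares of radius `ρ` and `2 ρ`, with gradient at most `C / ρ`. -/
lemma exists_scaled_bump : ∃ C : ℝ, 0 ≤ C ∧ ∀ (x : ℝ × ℝ) (ρ : ℝ), 0 < ρ → ∃ φ : ℝ × ℝ → ℝ,
    ContDiff ℝ 1 φ ∧ HasCompactSupport φ ∧ tsupport φ ⊆ Metric.closedBall x (2 * ρ) ∧
    (∀ z, 0 ≤ φ z) ∧ (∀ z, φ z ≤ 1) ∧ (∀ z ∈ Metric.closedBall x ρ, φ z = 1) ∧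
    ∀ z, ‖fderiv ℝ φ z‖ ≤ C / ρ := by
  let β : ContDiffBump (0 : ℝ × ℝ) := ⟨1, 2, by norm_num, by norm_num⟩
  have hβ : ContDiff ℝ 1 β := β.contDiff
  have hcont : Continuous (fderiv ℝ β) := hβ.continuous_fderiv (by norm_num)
  obtain ⟨C, hC⟩ := (β.hasCompactSupport.fderiv (𝕜 := ℝ)).exists_bound_of_continuous hcont
  refine ⟨C, (norm_nonneg _).trans (hC 0), fun x ρ hρ => ?_⟩
  have hin : Continuous fun z : ℝ × ℝ => ρ⁻¹ • (z - x) := by fun_prop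
  have hsupp : tsupport (fun z => β (ρ⁻¹ • (z - x))) ⊆ Metric.closedBall x (2 * ρ) := by
    refine closure_minimal (fun z hz => ?_) Metric.isClosed_closedBall
    have hz' : ρ⁻¹ • (z - x) ∈ Function.support β := hz
    rw [β.support_eq, Metric.mem_ball, dist_zero_right, norm_smul, norm_inv, Real.norm_eq_abs,
      abs_of_pos hρ, inv_mul_lt_iff₀ hρ] at hz'
    rw [Metric.mem_closedBall, dist_eq_norm]
    have : ‖z - x‖ < ρ * 2 := hz'
    linarith
  refine ⟨fun z => β (ρ⁻¹ • (z - x)), hβ.comp (by fun_prop), ?_, hsupp, fun z => β.nonneg,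
    fun z => β.le_one, ?_, ?_⟩
  · exact HasCompactSupport.of_support_subset_isCompact (isCompact_closedBall x (2 * ρ))
      (subset_closure.trans hsupp)
  · intro z hz
    apply β.one_of_mem_closedBall
    rw [mem_closedBall_zero_iff, norm_smul, norm_inv, Real.norm_eq_abs, abs_of_pos hρ,
      inv_mul_le_iff₀ hρ, ← dist_eq_norm]
    have : dist z x ≤ ρ := hz
    have h1 : β.rIn = 1 := rfl
    rw [h1]; linarith
  · intro z
    have h1 : HasFDerivAt (fun z : ℝ × ℝ => ρ⁻¹ • (z - x))
        (ρ⁻¹ • ContinuousLinearMap.id ℝ (ℝ × ℝ)) z :=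
      ((hasFDerivAt_id z).sub_const x).const_smul ρ⁻¹
    have h2 : HasFDerivAt β (fderiv ℝ β (ρ⁻¹ • (z - x))) (ρ⁻¹ • (z - x)) :=
      (hβ.differentiable (by norm_num)).differentiableAt.hasFDerivAt
    have h3 := h2.comp z h1
    have h4 : fderiv ℝ (fun z => β (ρ⁻¹ • (z - x))) z = ρ⁻¹ • fderiv ℝ β (ρ⁻¹ • (z - x)) := by
      refine h3.fderiv.trans ?_
      ext <;> simp
    rw [h4, norm_smul, norm_inv, Real.norm_eq_abs, abs_of_pos hρ, div_eq_inv_mul]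
    gcongr
    exact hC _

/-- At almost every point a finite measure is doubling at arbitrarily small radii. Otherwise the measure
of squares would decay faster than their area along `l ^ k * r₀`, whereas the density of the
area with respect to `N` is finite almost everywhere. -/
lemma ae_frequently_doubling (N : Measure (ℝ × ℝ)) [IsFiniteMeasure N] {l : ℝ} (hl0 : 0 < l)
    (hl1 : l < 1) : ∃ D : ℝ, 0 < D ∧ ∀ᵐ x ∂N, ∃ᶠ r in nhdsWithin (0:ℝ) (Set.Ioi 0),
      N.real (Metric.closedBall x r) ≤ D * N.real (Metric.closedBall x (l * r)) := by
  refine ⟨2 / l ^ 2, by positivity, ?_⟩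
  have hae := (Besicovitch.vitaliFamily N).ae_tendsto_rnDeriv
    (volume : Measure (ℝ × ℝ))
  filter_upwards [hae, (volume : Measure (ℝ × ℝ)).rnDeriv_lt_top N] with x hx hx'
  have hx1 := hx.comp (Besicovitch.tendsto_filterAt N x)
  -- the density of area with respect to `N` is finite at `x`
  obtain ⟨B, hB1, hB2⟩ := ENNReal.lt_iff_exists_nnreal_btwn.1 hx'
  have hev := hx1.eventually (gt_mem_nhds hB1)
  by_contra hcon
  rw [not_frequently] at hcon
  obtain ⟨δ, hδ, hδ'⟩ := mem_nhdsGT_iff_exists_Ioo_subset.1 (hev.and hcon)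
  have hδ0 : 0 < δ := hδ
  have hprop : ∀ r, 0 < r → r < δ →
      volume (Metric.closedBall x r) / N (Metric.closedBall x r) < B ∧
      (2 / l ^ 2) * N.real (Metric.closedBall x (l * r)) < N.real (Metric.closedBall x r) := by
    intro r hr hr'
    have := hδ' ⟨hr, hr'⟩
    exact ⟨this.1, not_le.1 this.2⟩
  set r₀ := δ / 2
  have hr₀ : 0 < r₀ := by positivity
  have hr₀δ : r₀ < δ := by simp only [r₀]; linarith
  have hrk : ∀ k : ℕ, 0 < l ^ k * r₀ ∧ l ^ k * r₀ < δ := fun k =>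
    ⟨by positivity, (mul_le_of_le_one_left hr₀.le (pow_le_one₀ hl0.le hl1.le)).trans_lt hr₀δ⟩
  have hdec : ∀ k : ℕ, (2 / l ^ 2) ^ k * N.real (Metric.closedBall x (l ^ k * r₀)) ≤
      N.real (Metric.closedBall x r₀) := by
    intro k
    induction k with
    | zero => simp
    | succ k ih =>
      refine le_trans ?_ ih
      have h1 := (hprop _ (hrk k).1 (hrk k).2).2
      rw [pow_succ, mul_assoc]
      gcongr
      rw [show l ^ (k + 1) * r₀ = l * (l ^ k * r₀) by ring]
      exact h1.le
  have hlow : ∀ k : ℕ, (2 * (l ^ k * r₀)) ^ 2 ≤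
      B * N.real (Metric.closedBall x (l ^ k * r₀)) := by
    intro k
    have h1 := (hprop _ (hrk k).1 (hrk k).2).1
    have hvol : volume (Metric.closedBall x (l ^ k * r₀)) =
        ENNReal.ofReal ((2 * (l ^ k * r₀)) ^ 2) := by
      rw [← Prod.mk.eta (p := x), ← closedBall_prod_same, Measure.volume_eq_prod,
        Measure.prod_prod, Real.volume_closedBall, Real.volume_closedBall,
        ← ENNReal.ofReal_mul (by have := (hrk k).1; positivity), sq]
    have hN0 : N (Metric.closedBall x (l ^ k * r₀)) ≠ 0 := by
      intro h0
      rw [h0, ENNReal.div_zero] at h1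
      · exact not_top_lt h1
      · rw [hvol, ENNReal.ofReal_ne_zero_iff]
        have := (hrk k).1
        positivity
    have h2 := (ENNReal.div_lt_iff (Or.inl hN0) (Or.inl (measure_ne_top _ _))).1 h1
    rw [hvol, ← ofReal_measureReal, ← ENNReal.ofReal_coe_nnreal, ← ENNReal.ofReal_mul (by positivity)] at h2
    exact (ENNReal.ofReal_lt_ofReal_iff'.1 h2).1.le
  have hcontr : ∀ k : ℕ, (2:ℝ) ^ k * (4 * r₀ ^ 2) ≤ B * N.real (Metric.closedBall x r₀) := by
    intro k
    have h1 := hlow k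
    have h2 := hdec k
    have h3 : (2:ℝ) ^ k * (4 * r₀ ^ 2) = (2 / l ^ 2) ^ k * (2 * (l ^ k * r₀)) ^ 2 := by
      have h4 : (2 / l ^ 2) ^ k * (l ^ k) ^ 2 = (2:ℝ) ^ k := by
        rw [← pow_mul, mul_comm k 2, pow_mul, ← mul_pow, div_mul_cancel₀ _ (by positivity)]
      linear_combination (-4 * r₀ ^ 2) * h4
    rw [h3]
    calc _ ≤ (2 / l ^ 2) ^ k * (B * N.real (Metric.closedBall x (l ^ k * r₀))) := by gcongr
      _ = B * ((2 / l ^ 2) ^ k * N.real (Metric.closedBall x (l ^ k * r₀))) := by ring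
      _ ≤ _ := by gcongr
  obtain ⟨k, hk⟩ := pow_unbounded_of_one_lt
    (B * N.real (Metric.closedBall x r₀) / (4 * r₀ ^ 2)) (by norm_num : (1:ℝ) < 2)
  rw [div_lt_iff₀ (by positivity)] at hk
  exact absurd (hcontr k) (not_le.2 hk)

/-- Let `h` be the density with respect to `N` of the derivative of `g` in direction `e`, and let `J`
bound the oscillation of `g`. Almost everywhere on `{h ≠ 0}`, the measure `N` of a small square on
which `N` is doubling is at most a multiple of `r * J`. The test function is a bump on the inner
square; the factor `r` is the area `r ^ 2` times its gradient `1 / r`. -/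
lemma ae_increment_lower (N lam : Measure (ℝ × ℝ)) [IsFiniteMeasure N] [lam.IsAddHaarMeasure]
    {U : Set (ℝ × ℝ)} (hUo : IsOpen U) {g h : ℝ × ℝ → ℝ} (hg : IntegrableOn g U lam)
    (hh : Integrable h N) (e : ℝ × ℝ)
    (parts : ∀ φ : ℝ × ℝ → ℝ, ContDiff ℝ 1 φ → HasCompactSupport φ → tsupport φ ⊆ U →
      ∫ z in U, g z * fderiv ℝ φ z e ∂lam = - ∫ z, φ z * h z ∂N)
    {κ : ℝ} (hκ : 0 < κ) (hκ1 : κ < 1) {J : ℝ × ℝ → ℝ → ℝ}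
    (hJ : ∀ x r, 0 < r → Metric.closedBall x r ⊆ U →
      ∃ m₀ : ℝ, ∀ᵐ z ∂lam, z ∈ Metric.closedBall x (κ * r / 2) → |g z - m₀| ≤ J x (κ * r)) :
    ∀ᵐ x ∂N, x ∈ U → h x ≠ 0 → ∀ D : ℝ, 0 < D → ∃ m : ℕ,
      ∀ᶠ r in nhdsWithin (0:ℝ) (Set.Ioi 0),
      N.real (Metric.closedBall x r) ≤ D * N.real (Metric.closedBall x (κ / 4 * r)) →
      N.real (Metric.closedBall x r) ≤ m * r * J x (κ * r) := by
  obtain ⟨C, hC0, hC⟩ := exists_scaled_bump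
  filter_upwards [(Besicovitch.vitaliFamily N).ae_tendsto_average_norm_sub hh.locallyIntegrable]
    with x hx hxU hhx D hD
  have hx1 := hx.comp (Besicovitch.tendsto_filterAt N x)
  -- with this error the Lebesgue-point term is absorbed after the doubling factor `D` is used
  set ε : ℝ := |h x| / (2 * D) with hε
  have hhx' : 0 < |h x| := abs_pos.2 hhx
  have hε0 : 0 < ε := by positivity
  have hev := hx1.eventually (gt_mem_nhds hε0)
  obtain ⟨R, hR0, hR⟩ := Metric.isOpen_iff.1 hUo x hxU
  set V₁ := lam.real (Metric.closedBall (0 : ℝ × ℝ) 1)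
  have hV₁ : 0 ≤ V₁ := measureReal_nonneg
  obtain ⟨m, hm⟩ := exists_nat_ge (2 * D / |h x| * (C * ‖e‖ * κ * V₁))
  refine ⟨m, ?_⟩
  filter_upwards [hev, Ioo_mem_nhdsGT hR0] with r hr1 hr2 hdoub
  have hr0 : 0 < r := hr2.1
  have hball : Metric.closedBall x r ⊆ U := (Metric.closedBall_subset_ball hr2.2).trans hR
  obtain ⟨m₀, hm₀⟩ := hJ x r hr0 hball
  have hρ : 0 < κ / 4 * r := by positivity
  obtain ⟨φ, φ1, φ2, φ3, φ4, φ5, φ6, φ7⟩ := hC x (κ / 4 * r) hρ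
  rw [show 2 * (κ / 4 * r) = κ * r / 2 by ring] at φ3
  have hQr : Metric.closedBall x (κ * r / 2) ⊆ Metric.closedBall x r :=
    Metric.closedBall_subset_closedBall (by nlinarith)
  have hQU := hQr.trans hball
  have hφU : tsupport φ ⊆ U := φ3.trans hQU
  have hp := parts φ φ1 φ2 hφU
  have hφ0 : ∀ z, z ∉ Metric.closedBall x (κ * r / 2) → φ z = 0 := fun z hz =>
    image_eq_zero_of_notMem_tsupport fun hz' => hz (φ3 hz')
  have hdφ0 : ∀ z, z ∉ Metric.closedBall x (κ * r / 2) → fderiv ℝ φ z = 0 := fun z hz =>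
    image_eq_zero_of_notMem_tsupport fun hz' => hz (φ3 (tsupport_fderiv_subset ℝ hz'))
  have hcontd : Continuous fun z => fderiv ℝ φ z e :=
    (φ1.continuous_fderiv (by norm_num)).clm_apply continuous_const
  have hcd : HasCompactSupport fun z => fderiv ℝ φ z e := φ2.fderiv_apply (𝕜 := ℝ) e
  have hdint : Integrable (fun z => fderiv ℝ φ z e) lam :=
    hcontd.integrable_of_hasCompactSupport hcd
  have hzero : ∫ z in U, fderiv ℝ φ z e ∂lam = 0 := by
    rw [setIntegral_eq_integral_of_forall_compl_eq_zero (fun z hz => by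
      rw [hdφ0 z fun hz' => hz (hQU hz')]; rfl)]
    have := integral_mul_fderiv_eq_neg_fderiv_mul_of_integrable (𝕜 := ℝ) (μ := lam)
      (f := fun _ => (1:ℝ)) (g := φ) (v := e) (by simp) (by simpa using hdint)
      (by simpa using φ1.continuous.integrable_of_hasCompactSupport φ2)
      (fun _ _ => differentiableAt_const _)
      (fun z _ => (φ1.differentiable (by norm_num)).differentiableAt)
    simpa using this
  -- subtracting the constant `m₀` from `g` is free, as the derivative of `φ` has integral zero
  have hIeq : ∫ z in U, g z * fderiv ℝ φ z e ∂lam =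
      ∫ z in Metric.closedBall x (κ * r / 2), (g z - m₀) * fderiv ℝ φ z e ∂lam := by
    have hgi : Integrable (fun z => g z * fderiv ℝ φ z e) (lam.restrict U) := by
      obtain ⟨B, hB⟩ := hcd.exists_bound_of_continuous hcontd
      exact hg.mul_bdd hcontd.aestronglyMeasurable (ae_of_all _ hB)
    have h1 : ∫ z in U, g z * fderiv ℝ φ z e ∂lam =
        ∫ z in U, (g z - m₀) * fderiv ℝ φ z e ∂lam := by
      simp only [sub_mul]
      rw [integral_sub hgi ((hdint.integrableOn).const_mul m₀), integral_const_mul, hzero]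
      simp
    rw [h1]
    refine (setIntegral_eq_of_subset_of_forall_sdiff_eq_zero hUo.measurableSet hQU
      fun z hz => ?_)
    rw [hdφ0 z hz.2]; simp
  have hvol : lam.real (Metric.closedBall x (κ * r / 2)) = (κ * r / 2) ^ 2 * V₁ := by
    rw [measureReal_def, Measure.addHaar_closedBall' _ _ (by positivity), ENNReal.toReal_mul,
      ENNReal.toReal_ofReal (by positivity)]
    simp [V₁, measureReal_def]
  have hup : |∫ z, φ z * h z ∂N| ≤ C * ‖e‖ * κ * V₁ * r * J x (κ * r) := by
    have h1 : |∫ z, φ z * h z ∂N| =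
        ‖∫ z in Metric.closedBall x (κ * r / 2), (g z - m₀) * fderiv ℝ φ z e ∂lam‖ := by
      rw [← hIeq, hp, norm_neg, Real.norm_eq_abs]
    rw [h1]
    refine (norm_setIntegral_le_of_norm_le_const_ae'
      (C := J x (κ * r) * (C / (κ / 4 * r) * ‖e‖)) measure_closedBall_lt_top ?_).trans ?_
    · filter_upwards [hm₀] with z hz hzm
      rw [norm_mul, Real.norm_eq_abs]
      have h2 := hz hzm
      have h3 : ‖fderiv ℝ φ z e‖ ≤ C / (κ / 4 * r) * ‖e‖ :=
        (ContinuousLinearMap.le_opNorm _ _).trans (by gcongr; exact φ7 z)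
      exact mul_le_mul h2 h3 (norm_nonneg _) ((abs_nonneg _).trans h2)
    · rw [hvol]
      apply le_of_eq
      field_simp
      ring
  -- lower bound from the Lebesgue point
  have hφi : Integrable φ N := φ1.continuous.integrable_of_hasCompactSupport φ2
  have hφb : ∀ z, ‖φ z‖ ≤ 1 := fun z => by
    rw [Real.norm_eq_abs, abs_of_nonneg (φ4 z)]; exact φ5 z
  have hφhi : Integrable (fun z => φ z * h z) N :=
    hh.bdd_mul hφi.aestronglyMeasurable (ae_of_all _ hφb)
  have hφint : N.real (Metric.closedBall x (κ / 4 * r)) ≤ ∫ z, φ z ∂N := by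
    rw [← integral_indicator_one Metric.isClosed_closedBall.measurableSet]
    refine integral_mono ((integrable_const (1:ℝ)).indicator Metric.isClosed_closedBall.measurableSet) hφi fun z => ?_
    by_cases hz : z ∈ Metric.closedBall x (κ / 4 * r)
    · simp [Set.indicator_of_mem hz, φ6 z hz]
    · rw [Set.indicator_of_notMem hz]; exact φ4 z
  have hdiffi : Integrable (fun z => ‖h z - h x‖) N := (hh.sub (integrable_const _)).norm
  have herr : |∫ z, φ z * (h z - h x) ∂N| ≤ ε * N.real (Metric.closedBall x r) := by
    have h1 : |∫ z, φ z * (h z - h x) ∂N| ≤ ∫ z in Metric.closedBall x r, ‖h z - h x‖ ∂N := by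
      rw [← integral_indicator Metric.isClosed_closedBall.measurableSet, ← Real.norm_eq_abs]
      refine norm_integral_le_of_norm_le
        (hdiffi.indicator Metric.isClosed_closedBall.measurableSet) (ae_of_all _ fun z => ?_)
      by_cases hz : z ∈ Metric.closedBall x r
      · rw [Set.indicator_of_mem hz, norm_mul]
        exact mul_le_of_le_one_left (norm_nonneg _) (hφb z)
      · rw [Set.indicator_of_notMem hz, hφ0 z fun hz' => hz (hQr hz')]; simp
    refine h1.trans ?_
    have h2 : (⨍ y in Metric.closedBall x r, ‖h y - h x‖ ∂N) < ε := hr1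
    rw [setAverage_eq, smul_eq_mul] at h2
    rcases (measureReal_nonneg (μ := N) (s := Metric.closedBall x r)).eq_or_lt with h0 | h0
    · rw [← h0, mul_zero]
      have : N (Metric.closedBall x r) = 0 := by
        rwa [eq_comm, measureReal_eq_zero_iff] at h0
      rw [Measure.restrict_eq_zero.2 this]; simp
    · rw [inv_mul_lt_iff₀ h0] at h2
      linarith
  have hsplit : h x * ∫ z, φ z ∂N = (∫ z, φ z * h z ∂N) - ∫ z, φ z * (h z - h x) ∂N := by
    simp only [mul_sub]
    rw [integral_sub hφhi (hφi.mul_const _), integral_mul_const]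
    ring
  have hlow : |h x| * N.real (Metric.closedBall x (κ / 4 * r)) ≤
      |∫ z, φ z * h z ∂N| + ε * N.real (Metric.closedBall x r) := by
    calc |h x| * N.real (Metric.closedBall x (κ / 4 * r)) ≤ |h x| * ∫ z, φ z ∂N := by gcongr
      _ = |h x * ∫ z, φ z ∂N| := by
        rw [abs_mul, abs_of_nonneg (integral_nonneg φ4)]
      _ ≤ _ := by
        rw [hsplit]
        exact (abs_sub _ _).trans (by gcongr)
  set n := N.real (Metric.closedBall x r)
  set n' := N.real (Metric.closedBall x (κ / 4 * r))
  have hn0 : 0 ≤ n := measureReal_nonneg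
  have hJ0 : 0 ≤ r * J x (κ * r) := by
    obtain ⟨z, hz1, hz2⟩ : ∃ z ∈ Metric.closedBall x (κ * r / 2), |g z - m₀| ≤ J x (κ * r) := by
      by_contra hcon
      push Not at hcon
      have : lam (Metric.closedBall x (κ * r / 2)) = 0 := by
        refine measure_mono_null (fun z hz => ?_) (ae_iff.1 hm₀)
        simp only [Set.mem_ofPred_eq, not_forall]
        exact ⟨hz, not_le.2 (hcon z hz)⟩
      exact (Metric.measure_closedBall_pos lam x (by positivity : 0 < κ * r / 2)).ne' this
    have := (abs_nonneg _).trans hz2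
    positivity
  have h1 : |h x| * n ≤ D * (|h x| * n') := by nlinarith
  have h2 : |h x| * n ≤ D * (C * ‖e‖ * κ * V₁ * r * J x (κ * r) + ε * n) :=
    h1.trans (by gcongr; linarith)
  have h3 : D * ε = |h x| / 2 := by rw [hε]; field_simp
  have h4 : |h x| / 2 * n ≤ D * (C * ‖e‖ * κ * V₁ * (r * J x (κ * r))) := by nlinarith
  calc n = 2 / |h x| * (|h x| / 2 * n) := by field_simp
    _ ≤ 2 / |h x| * (D * (C * ‖e‖ * κ * V₁ * (r * J x (κ * r)))) := by gcongr
    _ = (2 * D / |h x| * (C * ‖e‖ * κ * V₁)) * (r * J x (κ * r)) := by ring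
    _ ≤ m * (r * J x (κ * r)) := by gcongr
    _ = _ := by ring

/-! ### Monotonicity of BV functions and of their precise representatives -/

/-- Integration by parts in an arbitrary direction `w`. -/
lemma IsBVScalarOn.parts_dir {Ω : Set (EuclideanSpace ℝ (Fin 2))}
    {u : EuclideanSpace ℝ (Fin 2) → ℝ} {ν : Measure (EuclideanSpace ℝ (Fin 2))}
    {σ : EuclideanSpace ℝ (Fin 2) → EuclideanSpace ℝ (Fin 2)} (h : IsBVScalarOn Ω u ν σ)
    {φ : EuclideanSpace ℝ (Fin 2) → ℝ} (h1 : ContDiff ℝ 1 φ) (h2 : HasCompactSupport φ)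
    (h3 : tsupport φ ⊆ Ω) (w : EuclideanSpace ℝ (Fin 2)) :
    ∫ x in Ω, u x * fderiv ℝ φ x w = - ∫ x, φ x * ⟪σ x, w⟫ ∂ν := by
  have : IsFiniteMeasure ν := ⟨h.finite⟩
  have hw : w = ∑ l, w l • EuclideanSpace.single l (1:ℝ) := by
    ext i; fin_cases i <;> simp [Fin.sum_univ_two]
  have e1 : ∀ x, u x * fderiv ℝ φ x w =
      ∑ l, w l * (u x * fderiv ℝ φ x (EuclideanSpace.single l (1:ℝ))) := by
    intro x
    conv_lhs => rw [hw]
    rw [map_sum, Finset.mul_sum]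
    refine Finset.sum_congr rfl fun l _ => ?_
    rw [map_smul, smul_eq_mul]; ring
  have e2 : ∀ x, φ x * ⟪σ x, w⟫ = ∑ l, w l * (φ x * σ x l) := by
    intro x
    rw [PiLp.inner_apply, Finset.mul_sum]
    refine Finset.sum_congr rfl fun l _ => ?_
    simp; ring
  simp only [e1, e2]
  rw [integral_finsetSum, integral_finsetSum, ← Finset.sum_neg_distrib]
  · refine Finset.sum_congr rfl fun l _ => ?_
    rw [integral_const_mul, integral_const_mul, h.parts φ h1 h2 h3 l]; ring
  · intro l _
    refine Integrable.const_mul ?_ _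
    obtain ⟨B, hB⟩ := h2.exists_bound_of_continuous h1.continuous
    refine Integrable.bdd_mul (c := B) ?_ h1.continuous.aestronglyMeasurable (ae_of_all _ hB)
    refine Integrable.of_bound (C := 1) ?_ ?_
    · have : Measurable fun x => σ x l := (by fun_prop : Measurable fun y : EuclideanSpace ℝ (Fin 2) => y l).comp h.meas
      exact this.aestronglyMeasurable
    · filter_upwards [h.unit] with x hx
      rw [← hx]; exact PiLp.norm_apply_le _ _
  · intro l _
    refine Integrable.const_mul ?_ _
    have hc : Continuous fun x => fderiv ℝ φ x (EuclideanSpace.single l (1:ℝ)) :=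
      (h1.continuous_fderiv (by norm_num)).clm_apply continuous_const
    have hcs : HasCompactSupport fun x => fderiv ℝ φ x (EuclideanSpace.single l (1:ℝ)) :=
      h2.fderiv_apply (𝕜 := ℝ) _
    obtain ⟨B, hB⟩ := hcs.exists_bound_of_continuous hc
    exact Integrable.mul_bdd (c := B) h.integrable hc.aestronglyMeasurable (ae_of_all _ hB)

/-- Off a null set, `u` increases along every direction on which the polar density is non-negative.
The set `G` consists of points of convergence of the mollifications of `u`; on a segment of `Ω` with
such a direction these are monotone as soon as the mollification radius is small enough. -/
lemma IsBVScalarOn.exists_monotone {Ω : Set (EuclideanSpace ℝ (Fin 2))} (hΩo : IsOpen Ω)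
    (hΩc : Convex ℝ Ω)
    {u : EuclideanSpace ℝ (Fin 2) → ℝ} {ν : Measure (EuclideanSpace ℝ (Fin 2))}
    {σ : EuclideanSpace ℝ (Fin 2) → EuclideanSpace ℝ (Fin 2)} (h : IsBVScalarOn Ω u ν σ) :
    ∃ G ⊆ Ω, volume (Ω \ G) = 0 ∧ ∀ x ∈ G, ∀ y ∈ G,
      (∀ᵐ p ∂ν, 0 ≤ ⟪σ p, y - x⟫) → u x ≤ u y := by
  set g : EuclideanSpace ℝ (Fin 2) → ℝ := Ω.indicator u with hg
  have hgi : Integrable g := h.integrable.integrable_indicator hΩo.measurableSet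
  let φ : ℕ → ContDiffBump (0 : EuclideanSpace ℝ (Fin 2)) := fun n =>
    ⟨1 / ((n:ℝ) + 1), 2 * (1 / ((n:ℝ) + 1)), by positivity, by
      have : 0 < 1 / ((n:ℝ) + 1) := by positivity
      linarith⟩
  have hφ0 : Tendsto (fun n => (φ n).rOut) atTop (nhds 0) := by
    have := (tendsto_one_div_add_atTop_nhds_zero_nat (𝕜 := ℝ)).const_mul 2
    rw [mul_zero] at this
    exact this
  have hae := ContDiffBump.ae_convolution_tendsto_right_of_locallyIntegrable
    (μ := (volume : Measure (EuclideanSpace ℝ (Fin 2)))) (K := 2) hφ0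
    (Eventually.of_forall fun n => le_refl _) hgi.locallyIntegrable
  set F : ℕ → EuclideanSpace ℝ (Fin 2) → ℝ := fun n =>
    convolution ((φ n).normed volume) g (ContinuousLinearMap.lsmul ℝ ℝ) volume with hF
  set G : Set (EuclideanSpace ℝ (Fin 2)) :=
    {x ∈ Ω | Tendsto (fun n => F n x) atTop (nhds (g x))} with hG
  refine ⟨G, fun x hx => hx.1, measure_mono_null ?_ (ae_iff.1 hae), ?_⟩
  · rintro x ⟨hx1, hx2⟩ hx3
    exact hx2 ⟨hx1, hx3⟩
  intro x hx y hy hxy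
  have hgx : g x = u x := Set.indicator_of_mem hx.1 _
  have hgy : g y = u y := Set.indicator_of_mem hy.1 _
  rw [← hgx, ← hgy]
  -- the segment from `x` to `y` has positive distance to the complement of `Ω`
  have hseg : segment ℝ x y ⊆ Ω := hΩc.segment_subset hx.1 hy.1
  have hsegc : IsCompact (segment ℝ x y) := by
    rw [segment_eq_image_lineMap]
    exact isCompact_Icc.image (AffineMap.lineMap_continuous)
  obtain ⟨δ, hδ, hδΩ⟩ := hsegc.exists_cthickening_subset_open hΩo hseg
  refine le_of_tendsto_of_tendsto hx.2 hy.2 ?_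
  filter_upwards [hφ0.eventually (gt_mem_nhds hδ)] with n hn
  set ψ := (φ n).normed (volume : Measure (EuclideanSpace ℝ (Fin 2))) with hψ
  have hψ1 : ContDiff ℝ 1 ψ := (φ n).contDiff_normed
  have hψ2 : HasCompactSupport ψ := (φ n).hasCompactSupport_normed
  have hder : ∀ p, HasFDerivAt (F n)
      ((convolution (fderiv ℝ ψ) g ((ContinuousLinearMap.lsmul ℝ ℝ).precompL _) volume) p) p :=
    fun p => hψ2.hasFDerivAt_convolution_left _ hψ1 hgi.locallyIntegrable p
  have hcd : Continuous (fderiv ℝ ψ) := hψ1.continuous_fderiv (by norm_num)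
  have hnonneg : ∀ p ∈ segment ℝ x y,
      0 ≤ (convolution (fderiv ℝ ψ) g ((ContinuousLinearMap.lsmul ℝ ℝ).precompL _) volume) p
        (y - x) := by
    intro p hp
    rw [convolution_eq_swap, ContinuousLinearMap.integral_apply]
    · set χ : EuclideanSpace ℝ (Fin 2) → ℝ := fun t => ψ (p - t) with hχ
      have hχ1 : ContDiff ℝ 1 χ := hψ1.comp (by fun_prop)
      have hχs : tsupport χ ⊆ Metric.closedBall p (φ n).rOut := by
        refine closure_minimal (fun t ht => ?_) Metric.isClosed_closedBall
        have ht' : p - t ∈ Function.support ψ := ht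
        rw [hψ, (φ n).support_normed_eq, Metric.mem_ball, dist_zero_right, ← dist_eq_norm] at ht'
        rw [Metric.mem_closedBall, dist_comm]
        exact ht'.le
      have hχ2 : HasCompactSupport χ := HasCompactSupport.of_support_subset_isCompact
        (isCompact_closedBall p _) (subset_closure.trans hχs)
      have hχ3 : tsupport χ ⊆ Ω := (hχs.trans (Metric.closedBall_subset_closedBall hn.le)).trans
        ((Metric.closedBall_subset_cthickening hp δ).trans hδΩ)
      have hχd : ∀ t, fderiv ℝ χ t (y - x) = - fderiv ℝ ψ (p - t) (y - x) := by
        intro t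
        have h1 : HasFDerivAt (fun t => p - t)
            (-ContinuousLinearMap.id ℝ (EuclideanSpace ℝ (Fin 2))) t :=
          (hasFDerivAt_id t).const_sub p
        have h2 : HasFDerivAt ψ (fderiv ℝ ψ (p - t)) (p - t) :=
          (hψ1.differentiable (by norm_num)).differentiableAt.hasFDerivAt
        have h3 : fderiv ℝ χ t = _ := (h2.comp t h1).fderiv
        rw [h3]; simp
      have hp1 := h.parts_dir hχ1 hχ2 hχ3 (y - x)
      have hp2 : ∫ t, (((ContinuousLinearMap.lsmul ℝ ℝ).precompL (EuclideanSpace ℝ (Fin 2)))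
          (fderiv ℝ ψ (p - t)) (g t)) (y - x) = ∫ t, χ t * ⟪σ t, y - x⟫ ∂ν := by
        rw [← neg_inj, ← hp1, ← integral_indicator hΩo.measurableSet, ← integral_neg]
        congr 1; ext t
        rw [ContinuousLinearMap.precompL_apply]
        by_cases ht : t ∈ Ω
        · rw [Set.indicator_of_mem ht, hχd, hg, Set.indicator_of_mem ht]
          simp; ring
        · rw [Set.indicator_of_notMem ht, hg, Set.indicator_of_notMem ht]
          simp
      rw [hp2]
      refine integral_nonneg_of_ae ?_
      filter_upwards [hxy] with t ht
      exact mul_nonneg ((φ n).nonneg_normed _) ht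
    · have := (hψ2.fderiv (𝕜 := ℝ)).convolutionExists_left
        ((ContinuousLinearMap.lsmul ℝ ℝ).precompL (EuclideanSpace ℝ (Fin 2))) hcd
        hgi.locallyIntegrable p
      exact this.integrable_swap
  -- monotonicity of the mollification along the segment
  have hline : ∀ t : ℝ, HasDerivAt (fun t : ℝ => F n (x + t • (y - x)))
      ((convolution (fderiv ℝ ψ) g ((ContinuousLinearMap.lsmul ℝ ℝ).precompL _) volume)
        (x + t • (y - x)) (y - x)) t := by
    intro t
    have h1 : HasDerivAt (fun t : ℝ => x + t • (y - x)) (y - x) t := by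
      simpa using ((hasDerivAt_id t).smul_const (y - x)).const_add x
    exact (hder _).comp_hasDerivAt t h1
  have hm : MonotoneOn (fun t : ℝ => F n (x + t • (y - x))) (Set.Icc 0 1) := by
    refine monotoneOn_of_deriv_nonneg (convex_Icc 0 1)
      (fun t _ => (hline t).continuousAt.continuousWithinAt)
      (fun t _ => (hline t).differentiableAt.differentiableWithinAt) fun t ht => ?_
    rw [(hline t).deriv]
    refine hnonneg _ ?_
    rw [segment_eq_image']
    exact ⟨t, interior_subset ht, rfl⟩
  have := hm (Set.left_mem_Icc.2 zero_le_one) (Set.right_mem_Icc.2 zero_le_one) zero_le_one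
  simpa using this

/-- If `f` is increasing along the directions of an open set `O`, up to a null set, then `preciseRep f x`
lies between the values of `f` at good points before and after `x`. In particular the infimum in its
definition is taken over a non-empty set that is bounded below. -/
lemma preciseRep_bounds {Ω G O : Set (EuclideanSpace ℝ (Fin 2))} (hΩo : IsOpen Ω)
    (hG : volume (Ω \ G) = 0) (hO : IsOpen O) {f : EuclideanSpace ℝ (Fin 2) → ℝ}
    (hf : ∀ x ∈ G, ∀ y ∈ G, y - x ∈ O → f x ≤ f y) {x p q : EuclideanSpace ℝ (Fin 2)}
    (hx : x ∈ Ω) (hp : p ∈ G) (hq : q ∈ G) (hpx : p - x ∈ O) (hqx : x - q ∈ O) :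
    f q ≤ preciseRep f x ∧ preciseRep f x ≤ f p := by
  have hnear : ∀ᶠ r in nhdsWithin (0:ℝ) (Set.Ioi 0),
      ∀ y ∈ Metric.ball x r, y ∈ Ω ∧ p - y ∈ O ∧ y - q ∈ O := by
    have h1 : ∀ᶠ y in nhds x, y ∈ Ω ∧ p - y ∈ O ∧ y - q ∈ O :=
      (hΩo.eventually_mem hx).and
        (((continuous_const.sub continuous_id).continuousAt.eventually (hO.mem_nhds hpx)).and
          ((continuous_id.sub continuous_const).continuousAt.eventually (hO.mem_nhds hqx)))
    obtain ⟨ε, hε, hε'⟩ := Metric.eventually_nhds_iff_ball.1 h1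
    filter_upwards [Ioo_mem_nhdsGT hε] with r hr y hy
    exact hε' y (Metric.ball_subset_ball hr.2.le hy)
  set S : Set ℝ := {t : ℝ | Tendsto (fun r : ℝ =>
      volume (Metric.ball x r ∩ {y | t < f y}) / volume (Metric.ball x r))
    (nhdsWithin 0 (Set.Ioi 0)) (nhds 0)} with hS
  have hpS : f p ∈ S := by
    refine Tendsto.congr' ?_ tendsto_const_nhds
    filter_upwards [hnear] with r hr
    have : volume (Metric.ball x r ∩ {y | f p < f y}) = 0 := by
      refine measure_mono_null (fun y hy => ?_) hG
      have h1 := hr y hy.1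
      refine ⟨h1.1, fun hyG => ?_⟩
      exact absurd (hf y hyG p hp h1.2.1) (not_le.2 hy.2)
    rw [this, ENNReal.zero_div]
  have hlow : ∀ t ∈ S, f q ≤ t := by
    intro t ht
    by_contra hcon
    push Not at hcon
    have h1 : Tendsto (fun r : ℝ =>
        volume (Metric.ball x r ∩ {y | t < f y}) / volume (Metric.ball x r))
        (nhdsWithin 0 (Set.Ioi 0)) (nhds 1) := by
      refine Tendsto.congr' ?_ tendsto_const_nhds
      filter_upwards [hnear, self_mem_nhdsWithin] with r hr hr0
      have h2 : volume (Metric.ball x r ∩ {y | t < f y}) = volume (Metric.ball x r) := by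
        refine measure_congr ?_
        have h3 : ∀ᵐ y, y ∉ Ω \ G := measure_eq_zero_iff_ae_notMem.1 hG
        filter_upwards [h3] with y hy
        refine propext ⟨fun h => h.1, fun h => ⟨h, ?_⟩⟩
        have h4 := hr y h
        have hyG : y ∈ G := by
          by_contra hn
          exact hy ⟨h4.1, hn⟩
        exact hcon.trans_le (hf q hq y hyG h4.2.2)
      rw [h2, ENNReal.div_self (Metric.measure_ball_pos _ _ hr0).ne' measure_ball_lt_top.ne]
    exact zero_ne_one (tendsto_nhds_unique ht h1)
  exact ⟨le_csInf ⟨_, hpS⟩ hlow, csInf_le ⟨f q, hlow⟩ hpS⟩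

/-! ### Coordinates adapted to the two cones -/

lemma convex_cone (v : EuclideanSpace ℝ (Fin 2)) {a : ℝ} (ha : 0 < a) :
    Convex ℝ (cone v a) := by
  intro x hx y hy s t hs ht hst
  have hx' : a * ‖x‖ ≤ ⟪x, v⟫ := hx
  have hy' : a * ‖y‖ ≤ ⟪y, v⟫ := hy
  change a * ‖s • x + t • y‖ ≤ ⟪s • x + t • y, v⟫
  rw [inner_add_left, real_inner_smul_left, real_inner_smul_left]
  have h1 : ‖s • x + t • y‖ ≤ s * ‖x‖ + t * ‖y‖ := by
    refine (norm_add_le _ _).trans ?_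
    rw [norm_smul_of_nonneg hs, norm_smul_of_nonneg ht]
  nlinarith [mul_le_mul_of_nonneg_left h1 ha.le, mul_le_mul_of_nonneg_left hx' hs,
    mul_le_mul_of_nonneg_left hy' ht]

lemma isClosed_cone (v : EuclideanSpace ℝ (Fin 2)) (a : ℝ) : IsClosed (cone v a) :=
  isClosed_le (by fun_prop) (by fun_prop)

lemma smul_mem_cone {v x : EuclideanSpace ℝ (Fin 2)} {a t : ℝ} (hx : x ∈ cone v a)
    (ht : 0 ≤ t) : t • x ∈ cone v a := by
  have hx' : a * ‖x‖ ≤ ⟪x, v⟫ := hx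
  change a * ‖t • x‖ ≤ ⟪t • x, v⟫
  rw [real_inner_smul_left, norm_smul_of_nonneg ht]
  nlinarith [mul_le_mul_of_nonneg_left hx' ht]

/-- Strict separation of two cones that meet only at the origin. Hahn–Banach is applied to the origin
and the image under `(x, y) ↦ y - x` of the compact convex set of pairs in the product of the cones
normalised by `⟪x, v⟫ + ⟪y, w⟫ = 1`. -/
lemma cone_separation {v w : EuclideanSpace ℝ (Fin 2)} {a b : ℝ} (ha : 0 < a) (hb : 0 < b)
    (h : cone v a ∩ cone w b = {0}) :
    ∃ (Q : EuclideanSpace ℝ (Fin 2)) (c : ℝ), 0 < c ∧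
      (∀ x ∈ cone v a, c * ‖x‖ ≤ -⟪Q, x⟫) ∧ ∀ x ∈ cone w b, c * ‖x‖ ≤ ⟪Q, x⟫ := by
  have h0v : (0 : EuclideanSpace ℝ (Fin 2)) ∈ cone v a := by simp [cone]
  have h0w : (0 : EuclideanSpace ℝ (Fin 2)) ∈ cone w b := by simp [cone]
  let R : Set (EuclideanSpace ℝ (Fin 2) × EuclideanSpace ℝ (Fin 2)) :=
    (cone v a ×ˢ cone w b) ∩ {z | ⟪z.1, v⟫ + ⟪z.2, w⟫ = 1}
  have hRc : Convex ℝ R := by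
    refine ((convex_cone v ha).prod (convex_cone w hb)).inter ?_
    intro x hx y hy s t hs ht hst
    have hx' : ⟪x.1, v⟫ + ⟪x.2, w⟫ = 1 := hx
    have hy' : ⟪y.1, v⟫ + ⟪y.2, w⟫ = 1 := hy
    change ⟪s • x.1 + t • y.1, v⟫ + ⟪s • x.2 + t • y.2, w⟫ = 1
    simp only [inner_add_left, real_inner_smul_left]
    linear_combination s * hx' + t * hy' + hst
  have hRk : IsCompact R := by
    refine Metric.isCompact_of_isClosed_isBounded ?_ ?_
    · exact ((isClosed_cone v a).prod (isClosed_cone w b)).inter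
        (isClosed_eq (by fun_prop) continuous_const)
    · refine (Metric.isBounded_closedBall (x := (0 : EuclideanSpace ℝ (Fin 2) ×
        EuclideanSpace ℝ (Fin 2))) (r := max (1 / a) (1 / b))).subset fun z hz => ?_
      obtain ⟨x, y⟩ := z
      obtain ⟨⟨hx, hy⟩, hxy⟩ := hz
      have hx' : a * ‖x‖ ≤ ⟪x, v⟫ := hx
      have hy' : b * ‖y‖ ≤ ⟪y, w⟫ := hy
      have hxy' : ⟪x, v⟫ + ⟪y, w⟫ = 1 := hxy
      have hx0 : 0 ≤ a * ‖x‖ := by positivity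
      have hy0 : 0 ≤ b * ‖y‖ := by positivity
      rw [mem_closedBall_zero_iff, Prod.norm_def]
      refine max_le_max ?_ ?_
      · rw [le_div_iff₀ ha]; linarith [mul_comm a ‖x‖]
      · rw [le_div_iff₀ hb]; linarith [mul_comm b ‖y‖]
  let D : EuclideanSpace ℝ (Fin 2) × EuclideanSpace ℝ (Fin 2) →L[ℝ] EuclideanSpace ℝ (Fin 2) :=
    ContinuousLinearMap.snd ℝ _ _ - ContinuousLinearMap.fst ℝ _ _
  have hD0 : (0 : EuclideanSpace ℝ (Fin 2)) ∉ D '' R := by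
    rintro ⟨⟨x, y⟩, ⟨⟨hx, hy⟩, hxy⟩, hD⟩
    have e : y - x = 0 := hD
    have hyx : y = x := sub_eq_zero.1 e
    have hxy' : ⟪x, v⟫ + ⟪y, w⟫ = 1 := hxy
    have : x ∈ cone v a ∩ cone w b := ⟨hx, hyx ▸ hy⟩
    rw [h, Set.mem_singleton_iff] at this
    rw [hyx, this] at hxy'
    simp at hxy'
  obtain ⟨F, u, hu, hF⟩ := geometric_hahn_banach_point_closed
    (hRc.linear_image D.toLinearMap) (hRk.image D.continuous).isClosed hD0
  rw [map_zero] at hu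
  have hQ : ∀ x, ⟪(InnerProductSpace.toDual ℝ (EuclideanSpace ℝ (Fin 2))).symm F, x⟫ = F x :=
    fun x => InnerProductSpace.toDual_symm_apply
  refine ⟨(InnerProductSpace.toDual ℝ _).symm F, u * min a b, by positivity, ?_, ?_⟩
  · intro x hx
    rw [hQ]
    rcases eq_or_ne x 0 with rfl | hx0
    · simp
    have hx' : a * ‖x‖ ≤ ⟪x, v⟫ := hx
    have hp : 0 < ⟪x, v⟫ := lt_of_lt_of_le (mul_pos ha (norm_pos_iff.2 hx0)) hx'
    have hR : ((⟪x, v⟫⁻¹ • x, 0) : EuclideanSpace ℝ (Fin 2) × EuclideanSpace ℝ (Fin 2)) ∈ R := by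
      refine ⟨⟨smul_mem_cone hx (inv_nonneg.2 hp.le), h0w⟩, ?_⟩
      change ⟪⟪x, v⟫⁻¹ • x, v⟫ + ⟪(0 : EuclideanSpace ℝ (Fin 2)), w⟫ = 1
      rw [real_inner_smul_left, inner_zero_left, add_zero, inv_mul_cancel₀ hp.ne']
    have := hF _ (Set.mem_image_of_mem D hR)
    have e : D (⟪x, v⟫⁻¹ • x, 0) = -(⟪x, v⟫⁻¹ • x) := by simp [D]
    rw [e, map_neg, map_smul, smul_eq_mul, ← mul_neg, inv_mul_eq_div, lt_div_iff₀ hp] at this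
    have h1 : u * (min a b * ‖x‖) ≤ u * ⟪x, v⟫ := by
      refine mul_le_mul_of_nonneg_left (le_trans ?_ hx') hu.le
      exact mul_le_mul_of_nonneg_right (min_le_left _ _) (norm_nonneg _)
    linarith [mul_assoc u (min a b) ‖x‖]
  · intro x hx
    rw [hQ]
    rcases eq_or_ne x 0 with rfl | hx0
    · simp
    have hx' : b * ‖x‖ ≤ ⟪x, w⟫ := hx
    have hp : 0 < ⟪x, w⟫ := lt_of_lt_of_le (mul_pos hb (norm_pos_iff.2 hx0)) hx'
    have hR : ((0, ⟪x, w⟫⁻¹ • x) : EuclideanSpace ℝ (Fin 2) × EuclideanSpace ℝ (Fin 2)) ∈ R := by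
      refine ⟨⟨h0v, smul_mem_cone hx (inv_nonneg.2 hp.le)⟩, ?_⟩
      change ⟪(0 : EuclideanSpace ℝ (Fin 2)), v⟫ + ⟪⟪x, w⟫⁻¹ • x, w⟫ = 1
      rw [real_inner_smul_left, inner_zero_left, zero_add, inv_mul_cancel₀ hp.ne']
    have := hF _ (Set.mem_image_of_mem D hR)
    have e : D (0, ⟪x, w⟫⁻¹ • x) = ⟪x, w⟫⁻¹ • x := by simp [D]
    rw [e, map_smul, smul_eq_mul, inv_mul_eq_div, lt_div_iff₀ hp] at this
    have h1 : u * (min a b * ‖x‖) ≤ u * ⟪x, w⟫ := by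
      refine mul_le_mul_of_nonneg_left (le_trans ?_ hx') hu.le
      exact mul_le_mul_of_nonneg_right (min_le_right _ _) (norm_nonneg _)
    linarith [mul_assoc u (min a b) ‖x‖]

/-- Two numbers `α`, `β` comparable to `m` give a form `(s + t) α + (s - t) β` that remains bounded below
by `c s m` on a sector `|t| ≤ (1 + c / M) s`, slightly wider than the quadrant `|t| ≤ s`. -/
lemma sector_lower {s t α β m M c : ℝ} (hM : 0 < M) (hc : 0 < c) (hm : 0 ≤ m)
    (hα : c * m ≤ α) (hα' : α ≤ M * m) (hβ : c * m ≤ β) (hβ' : β ≤ M * m)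
    (h : |t| ≤ (1 + c / M) * s) : c * s * m ≤ (s + t) * α + (s - t) * β := by
  have hs : 0 ≤ s := by
    by_contra hn
    push Not at hn
    have : (1 + c / M) * s < 0 := mul_neg_of_pos_of_neg (by positivity) hn
    linarith [abs_nonneg t]
  have hcm : 0 ≤ c * m := by positivity
  have key : ∀ t α β : ℝ, 0 ≤ t → t ≤ (1 + c / M) * s → c * m ≤ α → c * m ≤ β → β ≤ M * m →
      c * s * m ≤ (s + t) * α + (s - t) * β := by
    intro t α β ht ht' hα hβ hβ'
    rcases le_total t s with hts | hts
    · have h1 : s * (c * m) ≤ (s + t) * α := by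
        apply mul_le_mul _ hα hcm (by linarith); linarith
      have h2 : 0 ≤ (s - t) * β := mul_nonneg (by linarith) (by linarith)
      nlinarith
    · have h1 : (2 * s) * (c * m) ≤ (s + t) * α := by
        apply mul_le_mul _ hα hcm (by linarith); linarith
      have h2 : (t - s) * β ≤ (c / M * s) * (M * m) := by
        apply mul_le_mul _ hβ' (by linarith) (by positivity)
        linarith
      have h3 : (c / M * s) * (M * m) = c * s * m := by field_simp
      nlinarith
  rw [abs_le] at h
  rcases le_total 0 t with ht | ht
  · exact key t α β ht h.2 hα hβ hβ'
  · have := key (-t) β α (by linarith) (by linarith) hβ hα hα'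
    linarith

/-- Linear coordinates in which gradients in the first cone are non-negative on a sector wider than
the quadrant `|w.2| ≤ w.1`, and gradients in the second cone on a sector wider than
`|w.1| ≤ w.2`, with a linear lower bound. -/
lemma exists_coords {v₁ v₂ : EuclideanSpace ℝ (Fin 2)} (hv₁ : ‖v₁‖ = 1) (hv₂ : ‖v₂‖ = 1)
    {a₁ a₂ : ℝ} (ha₁ : 0 < a₁) (ha₁' : a₁ ≤ 1) (ha₂ : 0 < a₂) (ha₂' : a₂ ≤ 1)
    (hC : cone v₁ a₁ ∩ cone v₂ a₂ = {0})
    (hC' : (Neg.neg '' cone v₁ a₁) ∩ cone v₂ a₂ = {0}) :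
    ∃ (T : EuclideanSpace ℝ (Fin 2) ≃L[ℝ] (ℝ × ℝ)) (K c : ℝ), 1 < K ∧ 0 < c ∧
      (∀ w : ℝ × ℝ, |w.2| ≤ K * w.1 → ∀ x ∈ cone v₁ a₁, c * w.1 * ‖x‖ ≤ ⟪x, T.symm w⟫) ∧
      ∀ w : ℝ × ℝ, |w.1| ≤ K * w.2 → ∀ x ∈ cone v₂ a₂, c * w.2 * ‖x‖ ≤ ⟪x, T.symm w⟫ := by
  have hneg : Neg.neg '' cone v₁ a₁ = cone (-v₁) a₁ := by
    ext x
    simp [cone, inner_neg_right]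
  rw [hneg] at hC'
  obtain ⟨Q, c', hc', hQ1, hQ2⟩ := cone_separation ha₁ ha₂ hC
  obtain ⟨P, c'', hc'', hP1, hP2⟩ := cone_separation ha₁ ha₂ hC'
  set c := min c' c'' with hcdef
  have hc : 0 < c := lt_min hc' hc''
  have q1 : ∀ x ∈ cone v₁ a₁, c * ‖x‖ ≤ -⟪Q, x⟫ := fun x hx =>
    (mul_le_mul_of_nonneg_right (min_le_left _ _) (norm_nonneg _)).trans (hQ1 x hx)
  have q2 : ∀ x ∈ cone v₂ a₂, c * ‖x‖ ≤ ⟪Q, x⟫ := fun x hx =>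
    (mul_le_mul_of_nonneg_right (min_le_left _ _) (norm_nonneg _)).trans (hQ2 x hx)
  have p1 : ∀ x ∈ cone v₁ a₁, c * ‖x‖ ≤ ⟪P, x⟫ := fun x hx => by
    have hx' : a₁ * ‖x‖ ≤ ⟪x, v₁⟫ := hx
    have := hP1 (-x) (by
      change a₁ * ‖-x‖ ≤ ⟪-x, -v₁⟫
      rwa [norm_neg, inner_neg_neg])
    rw [norm_neg, inner_neg_right, neg_neg] at this
    exact (mul_le_mul_of_nonneg_right (min_le_right _ _) (norm_nonneg _)).trans this
  have p2 : ∀ x ∈ cone v₂ a₂, c * ‖x‖ ≤ ⟪P, x⟫ := fun x hx =>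
    (mul_le_mul_of_nonneg_right (min_le_right _ _) (norm_nonneg _)).trans (hP2 x hx)
  set M := ‖P‖ + ‖Q‖ + 1 with hMdef
  have hM : 0 < M := by positivity
  have bP : ∀ x : EuclideanSpace ℝ (Fin 2), |⟪P, x⟫| ≤ M * ‖x‖ := fun x =>
    (abs_real_inner_le_norm P x).trans (mul_le_mul_of_nonneg_right
      (by rw [hMdef]; linarith [norm_nonneg Q]) (norm_nonneg _))
  have bQ : ∀ x : EuclideanSpace ℝ (Fin 2), |⟪Q, x⟫| ≤ M * ‖x‖ := fun x =>
    (abs_real_inner_le_norm Q x).trans (mul_le_mul_of_nonneg_right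
      (by rw [hMdef]; linarith [norm_nonneg P]) (norm_nonneg _))
  have m1 : v₁ ∈ cone v₁ a₁ := by
    change a₁ * ‖v₁‖ ≤ ⟪v₁, v₁⟫
    rw [real_inner_self_eq_norm_sq, hv₁]; linarith
  have m2 : v₂ ∈ cone v₂ a₂ := by
    change a₂ * ‖v₂‖ ≤ ⟪v₂, v₂⟫
    rw [real_inner_self_eq_norm_sq, hv₂]; linarith
  -- `P` is positive on both cones, `Q` negative on the first and positive on the second
  let F : ℝ × ℝ →ₗ[ℝ] EuclideanSpace ℝ (Fin 2) :=
    { toFun := fun w => (w.1 + w.2) • P + (w.2 - w.1) • Q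
      map_add' := fun w z => by simp only [Prod.fst_add, Prod.snd_add]; module
      map_smul' := fun r w => by
        simp only [Prod.smul_fst, Prod.smul_snd, smul_eq_mul, RingHom.id_apply]; module }
  have hFx : ∀ x w, ⟪x, F w⟫ = (w.1 + w.2) * ⟪P, x⟫ + (w.2 - w.1) * ⟪Q, x⟫ := by
    intro x w
    change ⟪x, (w.1 + w.2) • P + (w.2 - w.1) • Q⟫ = _
    rw [inner_add_right, real_inner_smul_right, real_inner_smul_right, real_inner_comm,
      real_inner_comm Q]
  have hFi : Function.Injective F := by
    rw [← LinearMap.ker_eq_bot, LinearMap.ker_eq_bot']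
    intro w hw
    have h1 := hFx v₁ w
    have h2 := hFx v₂ w
    rw [hw, inner_zero_right] at h1 h2
    have a1 := p1 v₁ m1
    have a2 := q1 v₁ m1
    have a3 := p2 v₂ m2
    have a4 := q2 v₂ m2
    rw [hv₁] at a1 a2
    rw [hv₂] at a3 a4
    have b1 : 0 < ⟪P, v₁⟫ := by linarith
    have b2 : 0 < -⟪Q, v₁⟫ := by linarith
    have b3 : 0 < ⟪P, v₂⟫ := by linarith
    have b4 : 0 < ⟪Q, v₂⟫ := by linarith
    have hA : w.1 + w.2 = 0 := by
      rcases lt_trichotomy (w.1 + w.2) 0 with hlt | heq | hgt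
      · have t1 : (w.1 + w.2) * ⟪P, v₁⟫ < 0 := mul_neg_of_neg_of_pos hlt b1
        have t2 : (w.1 + w.2) * ⟪P, v₂⟫ < 0 := mul_neg_of_neg_of_pos hlt b3
        rcases le_total 0 (w.2 - w.1) with hd | hd
        · have := mul_nonneg hd b2.le; linarith
        · have := mul_nonneg_of_nonpos_of_nonpos hd (neg_nonpos.2 b4.le); linarith
      · exact heq
      · have t1 : 0 < (w.1 + w.2) * ⟪P, v₁⟫ := mul_pos hgt b1
        have t2 : 0 < (w.1 + w.2) * ⟪P, v₂⟫ := mul_pos hgt b3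
        rcases le_total 0 (w.2 - w.1) with hd | hd
        · have := mul_nonneg hd b4.le; linarith
        · have := mul_nonneg_of_nonpos_of_nonpos hd (neg_nonpos.2 b2.le); linarith
    rw [hA] at h1
    have hB : w.2 - w.1 = 0 := by
      have : (w.2 - w.1) * ⟪Q, v₁⟫ = 0 := by linarith
      rcases mul_eq_zero.1 this with h | h
      · exact h
      · linarith
    ext
    · simp; linarith
    · simp; linarith
  have hdim : Module.finrank ℝ (ℝ × ℝ) = Module.finrank ℝ (EuclideanSpace ℝ (Fin 2)) := by
    simp
  let T : (ℝ × ℝ) ≃L[ℝ] EuclideanSpace ℝ (Fin 2) :=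
    (LinearEquiv.ofInjectiveOfFinrankEq F hFi hdim).toContinuousLinearEquiv
  have hT : ∀ w, T w = F w := fun w => rfl
  refine ⟨T.symm, 1 + c / M, c, by linarith [div_pos hc hM], hc, ?_, ?_⟩
  · intro w hw x hx
    rw [ContinuousLinearEquiv.symm_symm, hT, hFx]
    have := sector_lower (β := -⟪Q, x⟫) hM hc (norm_nonneg x) (p1 x hx) (abs_le.1 (bP x)).2
      (q1 x hx) (by linarith [(abs_le.1 (bQ x)).1]) hw
    linarith
  · intro w hw x hx
    rw [ContinuousLinearEquiv.symm_symm, hT, hFx]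
    have := sector_lower (β := ⟪Q, x⟫) hM hc (norm_nonneg x) (p2 x hx) (abs_le.1 (bP x)).2
      (q2 x hx) (abs_le.1 (bQ x)).2 hw
    linarith

/-- A BV function with polar density in a cone, plus the linear term, has a precise representative that
is cone-monotone in the coordinates `T`; moreover almost every value of `f` is comparable with
`preciseRep f` along the sector. -/
lemma scalar_package {Ω : Set (EuclideanSpace ℝ (Fin 2))} (hΩo : IsOpen Ω) (hΩc : Convex ℝ Ω)
    {v : EuclideanSpace ℝ (Fin 2)} (hv : ‖v‖ = 1) {a : ℝ} (ha : a ≤ 1)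
    {f' : EuclideanSpace ℝ (Fin 2) → ℝ} {ν : Measure (EuclideanSpace ℝ (Fin 2))}
    {σ : EuclideanSpace ℝ (Fin 2) → EuclideanSpace ℝ (Fin 2)} (hBV : IsBVScalarOn Ω f' ν σ)
    (hcone : ∀ᵐ x ∂ν, σ x ∈ cone v a) {f : EuclideanSpace ℝ (Fin 2) → ℝ}
    (hf : ∀ y, f y = f' y + ⟪v, y⟫) (T : EuclideanSpace ℝ (Fin 2) ≃L[ℝ] (ℝ × ℝ))
    {K c : ℝ} (hK : 1 < K) (hc : 0 < c)
    (hT : ∀ w : ℝ × ℝ, |w.2| ≤ K * w.1 → ∀ x ∈ cone v a, c * w.1 * ‖x‖ ≤ ⟪x, T.symm w⟫) :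
    ConeMono K (c / 2) (T.symm ⁻¹' Ω) (preciseRep f ∘ T.symm) ∧
      ∀ᵐ x, x ∈ Ω → ∀ y ∈ Ω,
        (|(T y).2 - (T x).2| < K * ((T y).1 - (T x).1) → f x ≤ preciseRep f y) ∧
        (|(T x).2 - (T y).2| < K * ((T x).1 - (T y).1) → preciseRep f y ≤ f x) := by
  obtain ⟨G, hGΩ, hG0, hGm⟩ := hBV.exists_monotone hΩo hΩc
  set O : Set (EuclideanSpace ℝ (Fin 2)) := {w | |(T w).2| < K * (T w).1} with hO
  have hOo : IsOpen O := isOpen_lt (by fun_prop) (by fun_prop)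
  have hpos : ∀ w : ℝ × ℝ, |w.2| < K * w.1 → 0 < w.1 := by
    intro w hw
    have := (abs_nonneg _).trans_lt hw
    exact pos_of_mul_pos_right this (by linarith)
  have hvm : v ∈ cone v a := by
    change a * ‖v‖ ≤ ⟪v, v⟫
    rw [real_inner_self_eq_norm_sq, hv]; linarith
  have hmono : ∀ x ∈ G, ∀ y ∈ G, y - x ∈ O → f x + c * (T (y - x)).1 ≤ f y := by
    intro x hx y hy hxy
    have h1 : f' x ≤ f' y := by
      refine hGm x hx y hy ?_
      filter_upwards [hcone] with p hp
      have h2 := hT (T (y - x)) (le_of_lt hxy) _ hp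
      rw [T.symm_apply_apply] at h2
      refine le_trans ?_ h2
      have := hpos _ hxy
      positivity
    have h2 := hT (T (y - x)) (le_of_lt hxy) _ hvm
    rw [T.symm_apply_apply, hv, inner_sub_right, mul_one] at h2
    rw [hf, hf]; linarith
  have hmono' : ∀ x ∈ G, ∀ y ∈ G, y - x ∈ O → f x ≤ f y := by
    intro x hx y hy hxy
    have := hmono x hx y hy hxy
    have := mul_pos hc (hpos _ hxy)
    linarith
  -- points of `G` in the sector above and below a point, arbitrarily close to it
  have hmeet : ∀ y ∈ Ω, ∀ W ∈ nhds y, ∀ e : EuclideanSpace ℝ (Fin 2) →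
      EuclideanSpace ℝ (Fin 2), Continuous e → (∃ d, ∀ t : ℝ, e (y + t • d) = t • T.symm (1, 0)) →
      ∃ p ∈ G, p ∈ W ∧ e p ∈ O := by
    intro y hy W hW e he ⟨d, hd⟩
    by_contra hcon
    push Not at hcon
    set V : Set (EuclideanSpace ℝ (Fin 2)) := interior W ∩ Ω ∩ e ⁻¹' O with hV
    have hVo : IsOpen V := (isOpen_interior.inter hΩo).inter (hOo.preimage he)
    have hVn : V.Nonempty := by
      have hl : Tendsto (fun t : ℝ => y + t • d) (nhdsWithin 0 (Set.Ioi 0)) (nhds y) := by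
        have : ContinuousAt (fun t : ℝ => y + t • d) 0 := by fun_prop
        have := this.tendsto
        rw [zero_smul, add_zero] at this
        exact this.mono_left nhdsWithin_le_nhds
      have h1 : ∀ᶠ t in nhdsWithin (0:ℝ) (Set.Ioi 0), y + t • d ∈ interior W ∩ Ω :=
        hl.eventually (inter_mem (interior_mem_nhds.2 hW) (hΩo.mem_nhds hy))
      obtain ⟨t, ht, ht0⟩ := (h1.and self_mem_nhdsWithin).exists
      refine ⟨_, ht, ?_⟩
      have ht0' : (0:ℝ) < t := ht0
      change |(T (e (y + t • d))).2| < K * (T (e (y + t • d))).1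
      rw [hd, map_smul, T.apply_symm_apply]
      simp
      nlinarith
    refine hVo.measure_ne_zero volume hVn (measure_mono_null ?_ hG0)
    intro p hp
    exact ⟨hp.1.2, fun hpG => hcon p hpG (interior_subset hp.1.1) hp.2⟩
  have hup : ∀ y ∈ Ω, ∀ W ∈ nhds y, ∃ p ∈ G, p ∈ W ∧ p - y ∈ O := fun y hy W hW =>
    hmeet y hy W hW (fun p => p - y) (by fun_prop) ⟨T.symm (1, 0), fun t => by simp⟩
  have hdn : ∀ y ∈ Ω, ∀ W ∈ nhds y, ∃ p ∈ G, p ∈ W ∧ y - p ∈ O := fun y hy W hW =>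
    hmeet y hy W hW (fun p => y - p) (by fun_prop) ⟨-T.symm (1, 0), fun t => by simp⟩
  constructor
  · intro z hz z' hz' hzz
    have hOz : T.symm z' - T.symm z ∈ O := by
      change |(T (T.symm z' - T.symm z)).2| < K * (T (T.symm z' - T.symm z)).1
      rw [map_sub, T.apply_symm_apply, T.apply_symm_apply]; exact hzz
    have hzp : 0 < z'.1 - z.1 := hpos (z' - z) hzz
    have hev : ∀ᶠ w : EuclideanSpace ℝ (Fin 2) × EuclideanSpace ℝ (Fin 2) in
        nhds (T.symm z, T.symm z'), w.2 - w.1 ∈ O ∧ (z'.1 - z.1) / 2 < (T (w.2 - w.1)).1 := by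
      refine Filter.Eventually.and ?_ ?_
      · have hct : Continuous fun w : EuclideanSpace ℝ (Fin 2) ×
          EuclideanSpace ℝ (Fin 2) => w.2 - w.1 := by fun_prop
        exact (hct.tendsto _).eventually (hOo.eventually_mem hOz)
      · have hct : Continuous fun w : EuclideanSpace ℝ (Fin 2) ×
          EuclideanSpace ℝ (Fin 2) => (T (w.2 - w.1)).1 := by fun_prop
        refine (hct.tendsto _).eventually (lt_mem_nhds ?_)
        rw [map_sub, T.apply_symm_apply, T.apply_symm_apply]
        change (z'.1 - z.1) / 2 < z'.1 - z.1
        linarith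
    obtain ⟨W₁, hW₁, W₂, hW₂, hWW⟩ := mem_nhds_prod_iff.1 hev
    obtain ⟨p, hp, hpW, hpO⟩ := hup _ hz W₁ hW₁
    obtain ⟨q, hq, -, hqO⟩ := hdn _ hz Set.univ univ_mem
    obtain ⟨p', hp', -, hpO'⟩ := hup _ hz' Set.univ univ_mem
    obtain ⟨q', hq', hqW', hqO'⟩ := hdn _ hz' W₂ hW₂
    have h1 := (preciseRep_bounds hΩo hG0 hOo hmono' hz hp hq hpO hqO).2
    have h2 := (preciseRep_bounds hΩo hG0 hOo hmono' hz' hp' hq' hpO' hqO').1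
    have hpq := hWW (Set.mk_mem_prod hpW hqW')
    have h3 := hmono p hp q' hq' hpq.1
    have h4 : c * ((z'.1 - z.1) / 2) ≤ c * (T (q' - p)).1 :=
      mul_le_mul_of_nonneg_left (le_of_lt hpq.2) hc.le
    change preciseRep f (T.symm z) + c / 2 * (z'.1 - z.1) ≤ preciseRep f (T.symm z')
    linarith
  · have hGae : ∀ᵐ x, x ∉ Ω \ G := measure_eq_zero_iff_ae_notMem.1 hG0
    filter_upwards [hGae] with x hx hxΩ y hy
    have hxG : x ∈ G := by
      by_contra hn
      exact hx ⟨hxΩ, hn⟩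
    constructor
    · intro hyx
      obtain ⟨p, hp, -, hpO⟩ := hup _ hy Set.univ univ_mem
      refine (preciseRep_bounds hΩo hG0 hOo hmono' hy hp hxG hpO ?_).1
      change |(T (y - x)).2| < K * (T (y - x)).1
      rw [map_sub]; exact hyx
    · intro hyx
      obtain ⟨q, hq, -, hqO⟩ := hdn _ hy Set.univ univ_mem
      refine (preciseRep_bounds hΩo hG0 hOo hmono' hy hxG hq ?_ hqO).2
      change |(T (x - y)).2| < K * (T (x - y)).1
      rw [map_sub]; exact hyx

/-! ### Distortion and increments -/

/-- `ae_increment_lower` in the coordinates `T`. Area is transported to its image under `T`, which is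
again a Haar measure, so that no Jacobian is needed. -/
lemma transfer_increment {Ω : Set (EuclideanSpace ℝ (Fin 2))} (hΩo : IsOpen Ω)
    {f : EuclideanSpace ℝ (Fin 2) → ℝ} (hfi : IntegrableOn f Ω)
    {ν : Measure (EuclideanSpace ℝ (Fin 2))} [IsFiniteMeasure ν]
    {h : EuclideanSpace ℝ (Fin 2) → ℝ} (hh : Integrable h ν) (d : EuclideanSpace ℝ (Fin 2))
    (parts : ∀ φ : EuclideanSpace ℝ (Fin 2) → ℝ, ContDiff ℝ 1 φ → HasCompactSupport φ →
      tsupport φ ⊆ Ω → ∫ x in Ω, f x * fderiv ℝ φ x d = - ∫ x, φ x * h x ∂ν)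
    (T : EuclideanSpace ℝ (Fin 2) ≃L[ℝ] (ℝ × ℝ)) {κ : ℝ} (hκ : 0 < κ) (hκ1 : κ < 1)
    {J : ℝ × ℝ → ℝ → ℝ}
    (hJ : ∀ x r, 0 < r → Metric.closedBall x r ⊆ T.symm ⁻¹' Ω → ∃ m₀, ∀ᵐ y,
      T y ∈ Metric.closedBall x (κ * r / 2) → |f y - m₀| ≤ J x (κ * r)) :
    ∀ᵐ x ∂(ν.map T), x ∈ T.symm ⁻¹' Ω → h (T.symm x) ≠ 0 → ∀ D, 0 < D → ∃ m : ℕ,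
      ∀ᶠ r in nhdsWithin (0:ℝ) (Set.Ioi 0),
        (ν.map T).real (Metric.closedBall x r)
            ≤ D * (ν.map T).real (Metric.closedBall x (κ / 4 * r)) →
          (ν.map T).real (Metric.closedBall x r) ≤ m * r * J x (κ * r) := by
  have hme : MeasurableEmbedding T := T.toHomeomorph.measurableEmbedding
  have hpre : T ⁻¹' (T.symm ⁻¹' Ω) = Ω := by ext x; simp
  have : IsFiniteMeasure (ν.map T) := by infer_instance
  have hlam : (volume.map T : Measure (ℝ × ℝ)).IsAddHaarMeasure :=
    T.isAddHaarMeasure_map volume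
  refine ae_increment_lower (g := f ∘ T.symm) (h := h ∘ T.symm) (ν.map T) (volume.map T)
    (hΩo.preimage T.symm.continuous) ?_ ?_ (T d) ?_ hκ hκ1 ?_
  · rw [hme.integrableOn_map_iff, hpre]
    refine hfi.congr_fun (fun x _ => ?_) hΩo.measurableSet
    simp
  · rw [hme.integrable_map_iff]
    refine hh.congr (ae_of_all _ fun x => ?_)
    simp
  · intro φ h1 h2 h3
    have h4 : HasCompactSupport (φ ∘ T) := h2.comp_homeomorph T.toHomeomorph
    have h5 : tsupport (φ ∘ T) ⊆ Ω := by
      have : tsupport (φ ∘ T) ⊆ T ⁻¹' tsupport φ :=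
        closure_minimal (fun x hx => subset_closure hx)
          ((isClosed_tsupport φ).preimage T.continuous)
      refine this.trans fun x hx => ?_
      have := h3 hx
      simpa using this
    have := parts (φ ∘ T) (h1.comp T.contDiff) h4 h5
    rw [hme.setIntegral_map, hme.integral_map, hpre]
    simp only [Function.comp_apply, T.symm_apply_apply] at this ⊢
    rw [← this]
    refine setIntegral_congr_fun hΩo.measurableSet fun x _ => ?_
    have e : fderiv ℝ (φ ∘ T) x = (fderiv ℝ φ (T x)).comp (T : EuclideanSpace ℝ (Fin 2) →L[ℝ] (ℝ × ℝ)) :=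
      ((h1.differentiable (by norm_num) (T x)).hasFDerivAt.comp x T.hasFDerivAt).fderiv
    simp only [e]
    rfl
  · intro x r hr hxr
    obtain ⟨m₀, hm⟩ := hJ x r hr hxr
    refine ⟨m₀, ?_⟩
    rw [hme.ae_map_iff]
    filter_upwards [hm] with y hy
    simpa using hy

/-- A matrix of unit Frobenius norm with a vanishing row has rank one. -/
lemma rank_eq_one_of_row_eq_zero {σ : Matrix (Fin 2) (Fin 2) ℝ}
    (h1 : ∑ j, ∑ l, (σ j l) ^ 2 = 1) {i : Fin 2} (hi : ∀ l, σ i l = 0) : σ.rank = 1 := by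
  have h0 : σ ≠ 0 := by
    rintro rfl
    simp at h1
  have hr0 : σ.rank ≠ 0 := by
    intro h
    rw [Matrix.rank, Submodule.finrank_eq_zero, LinearMap.range_eq_bot] at h
    refine h0 (Matrix.mulVec_injective ?_)
    ext v i
    simpa using congrFun (LinearMap.congr_fun h v) i
  have hle : σ.rank ≤ 1 := by
    have : ∃ k : Fin 2, σ = Matrix.vecMulVec (Pi.single k 1) (σ k) := by
      fin_cases i
      · refine ⟨1, ?_⟩
        ext a b
        have := hi b
        fin_cases a <;> simp_all [Matrix.vecMulVec_apply]
      · refine ⟨0, ?_⟩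
        ext a b
        have := hi b
        fin_cases a <;> simp_all [Matrix.vecMulVec_apply]
    obtain ⟨k, hk⟩ := this
    rw [hk]
    exact Matrix.rank_vecMulVec_le _ _
  omega

lemma dist_preciseRepVec_le (f₁ f₂ : EuclideanSpace ℝ (Fin 2) → ℝ)
    (x y : EuclideanSpace ℝ (Fin 2)) :
    dist (preciseRepVec f₁ f₂ x) (preciseRepVec f₁ f₂ y) ≤
      |preciseRep f₁ x - preciseRep f₁ y| + |preciseRep f₂ x - preciseRep f₂ y| := by
  rw [EuclideanSpace.dist_eq, Fin.sum_univ_two]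
  refine Real.sqrt_le_iff.2 ⟨by positivity, ?_⟩
  simp only [preciseRepVec, Real.dist_eq]
  simp
  nlinarith [abs_nonneg (preciseRep f₁ x - preciseRep f₁ y),
    abs_nonneg (preciseRep f₂ x - preciseRep f₂ y), sq_abs (preciseRep f₁ x - preciseRep f₁ y),
    sq_abs (preciseRep f₂ x - preciseRep f₂ y),
    mul_nonneg (abs_nonneg (preciseRep f₁ x - preciseRep f₁ y))
      (abs_nonneg (preciseRep f₂ x - preciseRep f₂ y))]

lemma le_dist_preciseRepVec (f₁ f₂ : EuclideanSpace ℝ (Fin 2) → ℝ)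
    (x y : EuclideanSpace ℝ (Fin 2)) :
    |preciseRep f₁ x - preciseRep f₁ y| ≤ dist (preciseRepVec f₁ f₂ x) (preciseRepVec f₁ f₂ y) ∧
    |preciseRep f₂ x - preciseRep f₂ y| ≤ dist (preciseRepVec f₁ f₂ x) (preciseRepVec f₁ f₂ y) := by
  rw [dist_eq_norm]
  exact ⟨PiLp.norm_apply_le (preciseRepVec f₁ f₂ x - preciseRepVec f₁ f₂ y) 0,
    PiLp.norm_apply_le (preciseRepVec f₁ f₂ x - preciseRepVec f₁ f₂ y) 1⟩

lemma ConeMono.abs_sub {K c : ℝ} {U : Set (ℝ × ℝ)} {u : ℝ × ℝ → ℝ} (h : ConeMono K c U u)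
    (hK : 1 < K) {z z' : ℝ × ℝ} (hz : z ∈ U) (hz' : z' ∈ U)
    (hzz : |z'.2 - z.2| ≤ |z'.1 - z.1|) : c * |z'.1 - z.1| ≤ |u z' - u z| := by
  rcases lt_trichotomy (z'.1 - z.1) 0 with hlt | heq | hgt
  · have := h z' hz' z hz (by rw [abs_of_neg hlt, abs_sub_comm] at hzz; nlinarith)
    rw [abs_of_neg hlt]
    have h2 := neg_abs_le (u z' - u z)
    linarith
  · rw [heq]; simp
  · have := h z hz z' hz' (by rw [abs_of_pos hgt] at hzz; nlinarith)
    rw [abs_of_pos hgt]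
    have h2 := le_abs_self (u z' - u z)
    linarith

/-- `f*` expands distances by at least a fixed positive factor: the difference of any two points lies,
up to sign, in one of the two sectors on which `f₁*` or `f₂*` grows linearly. -/
lemma exists_lower_lipschitz {Ω : Set (EuclideanSpace ℝ (Fin 2))}
    {f₁ f₂ : EuclideanSpace ℝ (Fin 2) → ℝ}
    (T : EuclideanSpace ℝ (Fin 2) ≃L[ℝ] (ℝ × ℝ)) {K c : ℝ} (hK : 1 < K) (hc : 0 < c)
    (h₁ : ConeMono K c (T.symm ⁻¹' Ω) (preciseRep f₁ ∘ T.symm))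
    (h₂ : ConeMono K c (Prod.swap ⁻¹' (T.symm ⁻¹' Ω)) ((preciseRep f₂ ∘ T.symm) ∘ Prod.swap)) :
    ∃ b, 0 < b ∧ ∀ x ∈ Ω, ∀ y ∈ Ω,
      b * dist x y ≤ dist (preciseRepVec f₁ f₂ x) (preciseRepVec f₁ f₂ y) := by
  set B : ℝ := ‖(T.symm : (ℝ × ℝ) →L[ℝ] EuclideanSpace ℝ (Fin 2))‖ + 1 with hB
  have hB0 : 0 < B := by positivity
  refine ⟨c / B, by positivity, fun x hx y hy => ?_⟩
  have hd : dist x y ≤ B * ‖T x - T y‖ := by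
    have := (T.symm : (ℝ × ℝ) →L[ℝ] EuclideanSpace ℝ (Fin 2)).le_opNorm (T x - T y)
    rw [dist_eq_norm]
    have e : (T.symm : (ℝ × ℝ) →L[ℝ] EuclideanSpace ℝ (Fin 2)) (T x - T y) = x - y := by simp
    rw [e] at this
    refine this.trans (mul_le_mul_of_nonneg_right (by rw [hB]; linarith) (norm_nonneg _))
  have hd' : c / B * dist x y ≤ c * ‖T x - T y‖ := by
    calc c / B * dist x y ≤ c / B * (B * ‖T x - T y‖) :=
          mul_le_mul_of_nonneg_left hd (by positivity)
      _ = c * ‖T x - T y‖ := by field_simp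
  refine hd'.trans ?_
  have hxU : T x ∈ T.symm ⁻¹' Ω := by simpa using hx
  have hyU : T y ∈ T.symm ⁻¹' Ω := by simpa using hy
  have hn : ‖T x - T y‖ = max |(T x).1 - (T y).1| |(T x).2 - (T y).2| := by
    rw [Prod.norm_def]; rfl
  rcases le_total |(T x).2 - (T y).2| |(T x).1 - (T y).1| with h | h
  · have := h₁.abs_sub hK hyU hxU h
    simp only [Function.comp_apply, T.symm_apply_apply] at this
    rw [hn, max_eq_left h]
    exact this.trans (le_dist_preciseRepVec f₁ f₂ x y).1
  · have := h₂.abs_sub hK (z := (T y).swap) (z' := (T x).swap) (by simpa using hy)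
      (by simpa using hx) h
    simp only [Function.comp_apply, Prod.swap_swap, T.symm_apply_apply] at this
    rw [hn, max_eq_right h]
    exact this.trans (le_dist_preciseRepVec f₁ f₂ x y).2

lemma ConeMono.abs_le_hInc {K c : ℝ} {U : Set (ℝ × ℝ)} {u : ℝ × ℝ → ℝ} (h : ConeMono K c U u)
    (hK : 1 < K) (hc : 0 < c) {x z : ℝ × ℝ} {s : ℝ} (hs : 0 < s)
    (hx : Metric.closedBall x s ⊆ U) (hz : z ∈ Metric.closedBall x (s / 2)) :
    |u z - u x| ≤ hInc u x s := by
  have e : 2 * (s / 2) = s := by ring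
  have h1 := h.bounds hK hc (half_pos hs) (by rwa [e]) hz
  have h2 := h.bounds hK hc (half_pos hs) (by rwa [e]) (Metric.mem_closedBall_self (half_pos hs).le)
  rw [e] at h1 h2
  unfold hInc
  rw [abs_le]
  constructor <;> linarith [h1.1, h1.2, h2.1, h2.2]

lemma vInc_eq (u : ℝ × ℝ → ℝ) (x : ℝ × ℝ) (s : ℝ) :
    vInc u x s = hInc (u ∘ Prod.swap) x.swap s := rfl

lemma closedBall_swap_subset {U : Set (ℝ × ℝ)} {x : ℝ × ℝ} {s : ℝ}
    (hx : Metric.closedBall x s ⊆ U) : Metric.closedBall x.swap s ⊆ Prod.swap ⁻¹' U := by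
  intro z hz
  refine hx ?_
  rw [mem_closedBall_prod] at hz ⊢
  exact ⟨hz.2, hz.1⟩

lemma eventually_closedBall_subset_of_isOpen {U : Set (ℝ × ℝ)} (hU : IsOpen U) {x : ℝ × ℝ} (hx : x ∈ U) :
    ∀ᶠ r in nhdsWithin (0:ℝ) (Set.Ioi 0), Metric.closedBall x r ⊆ U := by
  obtain ⟨ε, hε, h⟩ := Metric.nhds_basis_closedBall.mem_iff.1 (hU.mem_nhds hx)
  filter_upwards [Ioo_mem_nhdsGT hε] with r hr
  exact (Metric.closedBall_subset_closedBall hr.2.le).trans h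

/-- Infinite distortion at `x` forces the increments of `f*` around `x` to be superlinear. If they were
at most `M r` along radii tending to zero, then the constant sequence `y_j = x` would make `h′` finite,
as the denominators are at least a multiple of the radius by `exists_lower_lipschitz`. -/
lemma increments_of_hprime {Ω : Set (EuclideanSpace ℝ (Fin 2))} (hΩo : IsOpen Ω)
    {f₁ f₂ : EuclideanSpace ℝ (Fin 2) → ℝ}
    (T : EuclideanSpace ℝ (Fin 2) ≃L[ℝ] (ℝ × ℝ)) {K c : ℝ} (hK : 1 < K) (hc : 0 < c)
    (h₁ : ConeMono K c (T.symm ⁻¹' Ω) (preciseRep f₁ ∘ T.symm))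
    (h₂ : ConeMono K c (Prod.swap ⁻¹' (T.symm ⁻¹' Ω)) ((preciseRep f₂ ∘ T.symm) ∘ Prod.swap))
    {κ : ℝ} (hκ : 0 < κ) (hκ1 : κ < 1) {x : EuclideanSpace ℝ (Fin 2)} (hx : x ∈ Ω)
    (hp : hprime Ω (preciseRepVec f₁ f₂) x = ⊤) (M : ℝ) :
    ∀ᶠ r in nhdsWithin (0:ℝ) (Set.Ioi 0), M * r ≤
      hInc (preciseRep f₁ ∘ T.symm) (T x) (κ * r) + vInc (preciseRep f₂ ∘ T.symm) (T x) (κ * r) := by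
  by_contra hcon
  rw [not_eventually] at hcon
  have hxU : T x ∈ T.symm ⁻¹' Ω := by simpa using hx
  obtain ⟨b, hb, hlow⟩ := exists_lower_lipschitz T hK hc h₁ h₂
  have hfr := (hcon.and_eventually
    ((eventually_closedBall_subset_of_isOpen (hΩo.preimage T.symm.continuous) hxU).and
      (self_mem_nhdsWithin (a := (0:ℝ)) (s := Set.Ioi 0))))
  obtain ⟨r, hr0, hr⟩ := exists_seq_forall_of_frequently hfr
  set B : ℝ := ‖(T : EuclideanSpace ℝ (Fin 2) →L[ℝ] (ℝ × ℝ))‖ + 1 with hB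
  have hB0 : 0 < B := by positivity
  -- `T` maps the ball of radius `5 ε r` into the square of radius `κ r / 2`
  set ε : ℝ := κ / (10 * B) with hε
  have hε0 : 0 < ε := by positivity
  have hrpos : ∀ j, 0 < r j := fun j => (hr j).2.2
  have hrat : ∀ j, Hratio (Lsup Ω (preciseRepVec f₁ f₂) x (5 * (ε * r j)))
      (linf Ω (preciseRepVec f₁ f₂) x (ε * r j)) ≤ ENNReal.ofReal (M / (b * ε)) := by
    intro j
    have hrj := hrpos j
    obtain ⟨hj1, hj2, -⟩ := hr j
    have hsub : Metric.closedBall (T x) (κ * r j) ⊆ T.symm ⁻¹' Ω :=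
      (Metric.closedBall_subset_closedBall (by nlinarith)).trans hj2
    have hL : Lsup Ω (preciseRepVec f₁ f₂) x (5 * (ε * r j)) ≤ ENNReal.ofReal (M * r j) := by
      refine iSup₂_le fun z hz => ?_
      have hzx : dist z x ≤ 5 * (ε * r j) := hz.2
      have hTz : T z ∈ Metric.closedBall (T x) (κ * r j / 2) := by
        rw [Metric.mem_closedBall, dist_eq_norm, ← map_sub]
        have h3 := (T : EuclideanSpace ℝ (Fin 2) →L[ℝ] (ℝ × ℝ)).le_opNorm (z - x)
        have h4 : ‖(T : EuclideanSpace ℝ (Fin 2) →L[ℝ] (ℝ × ℝ))‖ * ‖z - x‖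
            ≤ B * (5 * (ε * r j)) := by
          rw [← dist_eq_norm]
          exact mul_le_mul (by rw [hB]; linarith) hzx dist_nonneg hB0.le
        have h5 : B * (5 * (ε * r j)) = κ * r j / 2 := by rw [hε]; field_simp; norm_num
        exact (h3.trans h4).trans h5.le
      have a1 := h₁.abs_le_hInc hK hc (by positivity) hsub hTz
      have a2 := h₂.abs_le_hInc hK hc (by positivity) (closedBall_swap_subset hsub)
        (z := (T z).swap) (by
          rw [mem_closedBall_prod] at hTz ⊢
          exact ⟨hTz.2, hTz.1⟩)
      rw [← vInc_eq] at a2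
      simp only [Function.comp_apply, Prod.swap_swap, T.symm_apply_apply] at a1 a2
      rw [edist_dist]
      refine ENNReal.ofReal_le_ofReal ((dist_preciseRepVec_le f₁ f₂ z x).trans ?_)
      push Not at hj1
      linarith
    have hl : ENNReal.ofReal (b * (ε * r j)) ≤ linf Ω (preciseRepVec f₁ f₂) x (ε * r j) := by
      refine le_iInf₂ fun z hz => ?_
      rw [edist_dist]
      refine ENNReal.ofReal_le_ofReal (le_trans ?_ (hlow z hz.1 x hx))
      exact mul_le_mul_of_nonneg_left hz.2 hb.le
    have hpos : 0 < b * (ε * r j) := by positivity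
    have hl0 : linf Ω (preciseRepVec f₁ f₂) x (ε * r j) ≠ 0 :=
      (lt_of_lt_of_le (ENNReal.ofReal_pos.2 hpos) hl).ne'
    rw [Hratio, if_neg hl0]
    refine (ENNReal.div_le_div hL hl).trans ?_
    rw [← ENNReal.ofReal_div_of_pos hpos]
    refine ENNReal.ofReal_le_ofReal (le_of_eq ?_)
    field_simp
  have hle : hprime Ω (preciseRepVec f₁ f₂) x ≤ ENNReal.ofReal (M / (b * ε)) := by
    unfold hprime
    have hr0' : Tendsto (fun j => ε * r j) atTop (nhds 0) := by
      have := (hr0.mono_right nhdsWithin_le_nhds).const_mul ε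
      rwa [mul_zero] at this
    have hr1 : ∀ j, 0 < ε * r j := fun j => mul_pos hε0 (hrpos j)
    refine iInf_le_of_le (fun j => ε * r j) ?_
    refine iInf_le_of_le (fun _ => x) ?_
    refine iInf_le_of_le hr0' ?_
    refine iInf_le_of_le hr1 ?_
    refine iInf_le_of_le (fun _ => hx) ?_
    refine iInf_le_of_le (fun j => by rw [dist_self]; exact hr1 j) ?_
    refine liminf_le_of_frequently_le' ?_
    exact (Eventually.of_forall hrat).frequently
  rw [hp, top_le_iff] at hle
  exact ENNReal.ofReal_ne_top hle

/-! ### Conclusion -/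

lemma increments_nonneg {K c : ℝ} {U : Set (ℝ × ℝ)} {u : ℝ × ℝ → ℝ} (h : ConeMono K c U u)
    (hK : 1 < K) (hc : 0 < c) {x : ℝ × ℝ} {s : ℝ} (hs : 0 < s)
    (hx : Metric.closedBall x s ⊆ U) : 0 ≤ hInc u x s :=
  (abs_nonneg _).trans
    (h.abs_le_hInc hK hc hs hx (Metric.mem_closedBall_self (half_pos hs).le))

/-- The oscillation of `f` on a square is bounded, almost everywhere, by the increment of its precise
representative over a larger horizontal segment. -/
lemma sector_control {Ω : Set (EuclideanSpace ℝ (Fin 2))} {f : EuclideanSpace ℝ (Fin 2) → ℝ}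
    (T : EuclideanSpace ℝ (Fin 2) ≃L[ℝ] (ℝ × ℝ)) {K : ℝ} (hK : 1 < K)
    (h : ∀ᵐ x, x ∈ Ω → ∀ y ∈ Ω,
      (|(T y).2 - (T x).2| < K * ((T y).1 - (T x).1) → f x ≤ preciseRep f y) ∧
      (|(T x).2 - (T y).2| < K * ((T x).1 - (T y).1) → preciseRep f y ≤ f x))
    {κ : ℝ} (hκ : 0 < κ) (hκ1 : κ < 1) {x : ℝ × ℝ} {r : ℝ} (hr : 0 < r)
    (hx : Metric.closedBall x r ⊆ T.symm ⁻¹' Ω) :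
    ∃ m₀, ∀ᵐ y, T y ∈ Metric.closedBall x (κ * r / 2) →
      |f y - m₀| ≤ hInc (preciseRep f ∘ T.symm) x (κ * r) := by
  have hs : 0 < κ * r := by positivity
  have hsr : κ * r ≤ r := by nlinarith
  refine ⟨preciseRep f (T.symm (x.1 - κ * r, x.2)), ?_⟩
  have hm : T.symm (x.1 - κ * r, x.2) ∈ Ω := by
    refine hx ?_
    rw [mem_closedBall_prod]
    simp [abs_of_pos hκ, abs_of_pos hr, hsr, hr.le]
  have hp : T.symm (x.1 + κ * r, x.2) ∈ Ω := by
    refine hx ?_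
    rw [mem_closedBall_prod]
    simp [abs_of_pos hκ, abs_of_pos hr, hsr, hr.le]
  filter_upwards [h] with y hy hyx
  have hyΩ : y ∈ Ω := by
    have := hx (Metric.closedBall_subset_closedBall (by linarith) hyx)
    simpa using this
  rw [mem_closedBall_prod, abs_le] at hyx
  have h1 := (hy hyΩ _ hp).1 (by
    rw [T.apply_symm_apply, abs_sub_comm]
    refine hyx.2.trans_lt ?_
    change κ * r / 2 < K * (x.1 + κ * r - (T y).1)
    nlinarith [hyx.1.2])
  have h2 := (hy hyΩ _ hm).2 (by
    rw [T.apply_symm_apply]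
    refine hyx.2.trans_lt ?_
    change κ * r / 2 < K * ((T y).1 - (x.1 - κ * r))
    nlinarith [hyx.1.1])
  simp only [hInc, Function.comp_apply]
  rw [abs_of_nonneg (by linarith)]
  linarith

/-- Theorem 1.1 (= Theorem 3.8): with cones `C₁, C₂` meeting only at the origin (also after
negating `C₁`), components `f′₁, f′₂ ∈ BV(Ω)` whose polar densities lie in the respective
cones a.e., `fᵢ(y) := f′ᵢ(y) + vᵢ·y`, and `f = (f₁,f₂) ∈ BV(Ω;ℝ²)`: the precise
representative `f*` is injective, and for `|Df|`-a.e. `x ∈ Ω`, if `h′_{f*}(x) = ∞` then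
`dDf/d|Df|(x)` has rank one. -/
theorem main_euclidean (Ω : Set (EuclideanSpace ℝ (Fin 2)))
    (hΩopen : IsOpen Ω) (hΩconv : Convex ℝ Ω)
    (v₁ v₂ : EuclideanSpace ℝ (Fin 2)) (hv₁ : ‖v₁‖ = 1) (hv₂ : ‖v₂‖ = 1)
    (a₁ a₂ : ℝ) (ha₁ : 0 < a₁) (ha₁' : a₁ ≤ 1) (ha₂ : 0 < a₂) (ha₂' : a₂ ≤ 1)
    (hC : cone v₁ a₁ ∩ cone v₂ a₂ = {0})
    (hC' : (Neg.neg '' cone v₁ a₁) ∩ cone v₂ a₂ = {0})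
    (f₁' f₂' : EuclideanSpace ℝ (Fin 2) → ℝ)
    (ν₁ ν₂ : Measure (EuclideanSpace ℝ (Fin 2)))
    (σ₁ σ₂ : EuclideanSpace ℝ (Fin 2) → EuclideanSpace ℝ (Fin 2))
    (hBV₁ : IsBVScalarOn Ω f₁' ν₁ σ₁) (hBV₂ : IsBVScalarOn Ω f₂' ν₂ σ₂)
    (hcone₁ : ∀ᵐ x ∂ν₁, σ₁ x ∈ cone v₁ a₁) (hcone₂ : ∀ᵐ x ∂ν₂, σ₂ x ∈ cone v₂ a₂)
    (f₁ f₂ : EuclideanSpace ℝ (Fin 2) → ℝ)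
    (hf₁ : ∀ y, f₁ y = f₁' y + ⟪v₁, y⟫) (hf₂ : ∀ y, f₂ y = f₂' y + ⟪v₂, y⟫)
    (f : EuclideanSpace ℝ (Fin 2) → EuclideanSpace ℝ (Fin 2))
    (hf : ∀ y, f y = (WithLp.equiv 2 (Fin 2 → ℝ)).symm ![f₁ y, f₂ y])
    (ν : Measure (EuclideanSpace ℝ (Fin 2)))
    (σ : EuclideanSpace ℝ (Fin 2) → Matrix (Fin 2) (Fin 2) ℝ)
    (hBV : IsBVVecOn Ω f ν σ) :
    Set.InjOn (preciseRepVec f₁ f₂) Ω ∧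
      ∀ᵐ x ∂ν, x ∈ Ω →
        (hprime Ω (preciseRepVec f₁ f₂) x = ⊤ → (σ x).rank = 1) := by
  obtain ⟨T, K, c, hK, hc, hT₁, hT₂⟩ := exists_coords hv₁ hv₂ ha₁ ha₁' ha₂ ha₂' hC hC'
  have hc2 : 0 < c / 2 := by positivity
  set U : Set (ℝ × ℝ) := T.symm ⁻¹' Ω with hU
  have hUo : IsOpen U := hΩopen.preimage T.symm.continuous
  have hUc : Convex ℝ U := hΩconv.linear_preimage T.symm.toLinearMap
  -- the coordinates `T` with the axes exchanged, in which `f₂` plays the role of `f₁`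
  let S : EuclideanSpace ℝ (Fin 2) ≃L[ℝ] (ℝ × ℝ) := T.trans (ContinuousLinearEquiv.prodComm ℝ ℝ ℝ)
  have hS : ∀ x, S x = (T x).swap := fun x => rfl
  have hSs : ∀ z, S.symm z = T.symm z.swap := fun z => rfl
  obtain ⟨hm₁, hs₁⟩ := scalar_package hΩopen hΩconv hv₁ ha₁' hBV₁ hcone₁ hf₁ T hK hc hT₁
  obtain ⟨hm₂', hs₂⟩ := scalar_package hΩopen hΩconv hv₂ ha₂' hBV₂ hcone₂ hf₂ S hK hc
    (fun w hw x hx => hT₂ w.swap hw x hx)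
  have hm₂ : ConeMono K (c / 2) (Prod.swap ⁻¹' U) ((preciseRep f₂ ∘ T.symm) ∘ Prod.swap) := hm₂'
  obtain ⟨b, hb, hlow⟩ := exists_lower_lipschitz T hK hc2 hm₁ hm₂
  refine ⟨fun x hx y hy hxy => ?_, ?_⟩
  · have := hlow x hx y hy
    rw [hxy, dist_self] at this
    have h0 : dist x y ≤ 0 := by
      by_contra hn
      push Not at hn
      have := mul_pos hb hn
      linarith
    exact dist_le_zero.1 h0
  have hνf : IsFiniteMeasure ν := ⟨hBV.finite⟩
  -- `κ` is small enough for the sides of a square of radius `r` to be comparable, in the sector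
  -- order, with points at distance `κ r` from its centre
  obtain ⟨κ, hκ, hκ1, hκK⟩ : ∃ κ : ℝ, 0 < κ ∧ κ < 1 ∧ 1 < K * (1 - κ) := by
    refine ⟨(1 - K⁻¹) / 2, ?_, ?_, ?_⟩
    · have := inv_lt_one_of_one_lt₀ hK
      linarith
    · have : 0 < K⁻¹ := by positivity
      linarith
    · have : K * (1 - (1 - K⁻¹) / 2) = (K + 1) / 2 := by field_simp; ring
      rw [this]; linarith
  have hJ₁ := fun (x : ℝ × ℝ) (r : ℝ) (hr : 0 < r) (hx : Metric.closedBall x r ⊆ T.symm ⁻¹' Ω) =>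
    sector_control T hK hs₁ hκ hκ1 hr hx
  have hJ₂ : ∀ (x : ℝ × ℝ) (r : ℝ), 0 < r → Metric.closedBall x r ⊆ T.symm ⁻¹' Ω →
      ∃ m₀, ∀ᵐ y, T y ∈ Metric.closedBall x (κ * r / 2) →
        |f₂ y - m₀| ≤ vInc (preciseRep f₂ ∘ T.symm) x (κ * r) := by
    intro x r hr hx
    obtain ⟨m₀, hm⟩ := sector_control S hK hs₂ hκ hκ1 hr (closedBall_swap_subset hx)
    refine ⟨m₀, ?_⟩
    filter_upwards [hm] with y hy hyx
    refine hy ?_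
    rw [hS]
    rw [mem_closedBall_prod] at hyx ⊢
    exact ⟨hyx.2, hyx.1⟩
  have hσi : ∀ j l, Integrable (fun x => σ x j l) ν := by
    intro j l
    refine Integrable.of_bound (C := 1) (hBV.meas j l).aestronglyMeasurable ?_
    filter_upwards [hBV.unit] with x hx
    have h1 : (σ x j l) ^ 2 ≤ ∑ j, ∑ l, (σ x j l) ^ 2 :=
      (Finset.single_le_sum (f := fun l => (σ x j l) ^ 2) (fun i _ => sq_nonneg _)
        (Finset.mem_univ l)).trans
      (Finset.single_le_sum (f := fun j => ∑ l, (σ x j l) ^ 2)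
        (fun i _ => Finset.sum_nonneg fun _ _ => sq_nonneg _) (Finset.mem_univ j))
    rw [hx] at h1
    rw [Real.norm_eq_abs]
    exact (sq_le_one_iff_abs_le_one _).1 h1
  have hfc₁ : ∀ y, f y 0 = f₁ y := fun y => by rw [hf]; rfl
  have hfc₂ : ∀ y, f y 1 = f₂ y := fun y => by rw [hf]; rfl
  have hfi : ∀ j, IntegrableOn (fun x => f x j) Ω := fun j =>
    (EuclideanSpace.proj (𝕜 := ℝ) j : EuclideanSpace ℝ (Fin 2) →L[ℝ] ℝ).integrable_comp
      hBV.integrable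
  have hinc₁ := fun l : Fin 2 => transfer_increment hΩopen (hfi 0) (hσi 0 l)
    (EuclideanSpace.single l (1:ℝ)) (fun φ h1 h2 h3 => hBV.parts φ h1 h2 h3 0 l) T hκ hκ1
    (J := hInc (preciseRep f₁ ∘ T.symm)) (by simpa only [hfc₁] using hJ₁)
  have hinc₂ := fun l : Fin 2 => transfer_increment hΩopen (hfi 1) (hσi 1 l)
    (EuclideanSpace.single l (1:ℝ)) (fun φ h1 h2 h3 => hBV.parts φ h1 h2 h3 1 l) T hκ hκ1
    (J := vInc (preciseRep f₂ ∘ T.symm)) (by simpa only [hfc₂] using hJ₂)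
  obtain ⟨D, hD, hdoub⟩ := ae_frequently_doubling (ν.map T) (l := κ / 4) (by positivity)
    (by linarith)
  -- the points of infinite distortion at which the estimates for two non-zero rows hold
  set A : Set (ℝ × ℝ) := {z | z ∈ U ∧ hprime Ω (preciseRepVec f₁ f₂) (T.symm z) = ⊤ ∧
    (∃ᶠ r in nhdsWithin (0:ℝ) (Set.Ioi 0), (ν.map T).real (Metric.closedBall z r)
      ≤ D * (ν.map T).real (Metric.closedBall z (κ / 4 * r))) ∧
    (∃ m : ℕ, ∀ᶠ r in nhdsWithin (0:ℝ) (Set.Ioi 0),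
        (ν.map T).real (Metric.closedBall z r)
            ≤ D * (ν.map T).real (Metric.closedBall z (κ / 4 * r)) →
          (ν.map T).real (Metric.closedBall z r) ≤
            m * r * hInc (preciseRep f₁ ∘ T.symm) z (κ * r)) ∧
    (∃ m : ℕ, ∀ᶠ r in nhdsWithin (0:ℝ) (Set.Ioi 0),
        (ν.map T).real (Metric.closedBall z r)
            ≤ D * (ν.map T).real (Metric.closedBall z (κ / 4 * r)) →
          (ν.map T).real (Metric.closedBall z r) ≤
            m * r * vInc (preciseRep f₂ ∘ T.symm) z (κ * r))} with hA
  have hA0 : (ν.map T) A = 0 := by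
    refine null_of_increments hm₁ hm₂ hUc hUo hK hc2 hκ hκK (ν.map T) (fun z hz => hz.1) ?_ ?_
    · rintro z ⟨hzU, -, hdz, ⟨m₁, h1⟩, ⟨m₂, h2⟩⟩
      refine ⟨m₁ + m₂, ?_⟩
      have hpos : ∀ᶠ r in nhdsWithin (0:ℝ) (Set.Ioi 0), 0 < r := self_mem_nhdsWithin
      refine (hdz.and_eventually (h1.and (h2.and (hpos.and
        (eventually_closedBall_subset_of_isOpen hUo hzU))))).mono ?_
      rintro r ⟨hd, h1, h2, hr, hsub⟩
      have hs : 0 < κ * r := by positivity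
      have hsub' : Metric.closedBall z (κ * r) ⊆ U :=
        (Metric.closedBall_subset_closedBall (by nlinarith)).trans hsub
      have n1 := increments_nonneg hm₁ hK hc2 hs hsub'
      have n2 := increments_nonneg hm₂ hK hc2 hs (closedBall_swap_subset hsub')
      rw [← vInc_eq] at n2
      push_cast
      constructor
      · refine (h1 hd).trans ?_
        gcongr
        linarith [Nat.cast_nonneg (α := ℝ) m₂]
      · refine (h2 hd).trans ?_
        gcongr
        linarith [Nat.cast_nonneg (α := ℝ) m₁]
    · rintro z ⟨hzU, hz, -⟩ M
      have := increments_of_hprime hΩopen T hK hc2 hm₁ hm₂ hκ hκ1 hzU hz M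
      rwa [T.apply_symm_apply] at this
  -- off the null set `A`, infinite distortion excludes that both rows are non-zero
  have hall : ∀ᵐ z ∂(ν.map T), z ∈ U → hprime Ω (preciseRepVec f₁ f₂) (T.symm z) = ⊤ →
      (∀ l, σ (T.symm z) 0 l = 0) ∨ (∀ l, σ (T.symm z) 1 l = 0) := by
    filter_upwards [measure_eq_zero_iff_ae_notMem.1 hA0, hdoub, ae_all_iff.2 hinc₁,
      ae_all_iff.2 hinc₂] with z hzA hzd hz1 hz2 hzU hzp
    by_contra hcon
    push Not at hcon
    obtain ⟨⟨l, hl⟩, ⟨l', hl'⟩⟩ := hcon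
    exact hzA ⟨hzU, hzp, hzd, hz1 l hzU hl D hD, hz2 l' hzU hl' D hD⟩
  have hall' := ae_of_ae_map T.continuous.measurable.aemeasurable hall
  filter_upwards [hall', hBV.unit] with x hx hu hxΩ hxp
  rw [T.symm_apply_apply] at hx
  rcases hx (by rw [hU, Set.mem_preimage, T.symm_apply_apply]; exact hxΩ) hxp with h | h
  · exact rank_eq_one_of_row_eq_zero hu h
  · exact rank_eq_one_of_row_eq_zero hu h
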